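/- There exist absolute constants c⋆ ∈ (0,1) and C⋆ > 1 such that the following holds. Let p ≥ 5 be a prime, K ≥ 1 a real number, and μ : SL₂(F_p) → [0,∞) a function with ∑_{g} μ(g) = 1 and μ(g) = μ(g^{−1}) for all g, satisfying: (i) ∑_{x ∈ gΓ} μ(x) ≤ K^{−1} for every proper subgroup Γ of SL₂(F_p) and every g ∈ SL₂(F_p); and (ii) μ(g) ≤ K^{−1} for every g. Then for every positive integer k with k ≤ K^{c⋆}: 0 ≤ ∑_{g} (μ^{(2^k)}(g))² − |SL₂(F_p)|^{−1} ≤ C⋆^k · K^{−c⋆·k}. -/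

import Mathlib

open Finset Pointwise

/-- Convolution of two functions on a finite group:
`(μ∗ν)(x) = ∑_y μ(y)·ν(y⁻¹x)`. -/
noncomputable def convG {G : Type*} [Group G] [Fintype G] (μ ν : G → ℝ) : G → ℝ :=
  fun x => ∑ y, μ y * ν (y⁻¹ * x)

/-- `iterConv μ n` is the `(n+1)`-fold self-convolution `μ^{(n+1)}` of `μ`,
so `iterConv μ 0 = μ^{(1)} = μ`. -/
noncomputable def iterConv {G : Type*} [Group G] [Fintype G] (μ : G → ℝ) : ℕ → G → ℝ
  | 0 => μ
  | n + 1 => convG (iterConv μ n) μ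

open Finset Pointwise

section conv
variable {G : Type*} [Group G] [Fintype G]

lemma convG_assoc (f g h : G → ℝ) : convG (convG f g) h = convG f (convG g h) := by
  funext x
  simp only [convG, Finset.sum_mul, Finset.mul_sum]
  rw [Finset.sum_comm]
  refine Finset.sum_congr rfl fun y _ => ?_
  refine Fintype.sum_equiv (Equiv.mulLeft y⁻¹) _ _ fun z => ?_
  simp [mul_assoc]

lemma iterConv_add (μ : G → ℝ) (m n : ℕ) :
    iterConv μ (m + n + 1) = convG (iterConv μ m) (iterConv μ n) := by
  induction n with
  | zero => rfl
  | succ n ih =>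
    show convG (iterConv μ (m + n + 1)) μ = _
    rw [ih, convG_assoc]; rfl

lemma convG_symm (f g : G → ℝ) (hf : ∀ x, f x⁻¹ = f x) (hg : ∀ x, g x⁻¹ = g x) (x : G) :
    convG f g x⁻¹ = convG g f x := by
  simp only [convG]
  refine Fintype.sum_equiv (Equiv.mulLeft x) _ _ fun y => ?_
  simp only [Equiv.coe_mulLeft, mul_inv_rev, mul_assoc, inv_mul_cancel, mul_one]
  rw [hf, ← hg, mul_comm]; simp

lemma iterConv_symm (μ : G → ℝ) (h : ∀ x, μ x⁻¹ = μ x) (n : ℕ) : ∀ x,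
    iterConv μ n x⁻¹ = iterConv μ n x := by
  induction n with
  | zero => exact h
  | succ n ih =>
    intro x
    show convG (iterConv μ n) μ x⁻¹ = _
    rw [convG_symm _ _ ih h]
    have := iterConv_add μ 0 n
    rw [zero_add] at this
    rw [this]; rfl

lemma convG_nonneg (f g : G → ℝ) (hf : ∀ x, 0 ≤ f x) (hg : ∀ x, 0 ≤ g x) (x : G) :
    0 ≤ convG f g x := Finset.sum_nonneg fun y _ => mul_nonneg (hf _) (hg _)

lemma convG_sum (f g : G → ℝ) : ∑ x, convG f g x = (∑ x, f x) * ∑ x, g x := by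
  simp only [convG]
  rw [Finset.sum_comm, Finset.sum_mul]
  refine Finset.sum_congr rfl fun y _ => ?_
  rw [← Finset.mul_sum]
  congr 1
  exact Fintype.sum_equiv (Equiv.mulLeft y⁻¹) _ _ fun z => rfl

lemma iterConv_nonneg (μ : G → ℝ) (h : ∀ x, 0 ≤ μ x) (n : ℕ) : ∀ x, 0 ≤ iterConv μ n x := by
  induction n with
  | zero => exact h
  | succ n ih => exact convG_nonneg _ _ ih h

lemma iterConv_sum (μ : G → ℝ) (h : ∑ x, μ x = 1) (n : ℕ) : ∑ x, iterConv μ n x = 1 := by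
  induction n with
  | zero => exact h
  | succ n ih =>
    show ∑ x, convG (iterConv μ n) μ x = 1
    rw [convG_sum, ih, h, one_mul]

lemma convG_one (ν : G → ℝ) (h : ∀ x, ν x⁻¹ = ν x) : convG ν ν 1 = ∑ x, ν x ^ 2 := by
  simp only [convG, mul_one, h, sq]

lemma convG_le_aux (f g : G → ℝ) (x : G) :
    (convG f g x) ^ 2 ≤ (∑ y, f y ^ 2) * ∑ y, g y ^ 2 := by
  have := Finset.sum_mul_sq_le_sq_mul_sq Finset.univ f (fun y => g (y⁻¹ * x))
  refine this.trans (le_of_eq ?_)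
  congr 1
  refine Fintype.sum_equiv ((Equiv.inv G).trans (Equiv.mulRight x)) _ _ fun z => ?_
  simp

lemma convG_le (ν : G → ℝ) (x : G) : convG ν ν x ≤ ∑ y, ν y ^ 2 := by
  have := convG_le_aux ν ν x
  have h0 : 0 ≤ ∑ y, ν y ^ 2 := Finset.sum_nonneg fun y _ => sq_nonneg _
  nlinarith [abs_le_of_sq_le_sq' (by rw [sq (∑ y, ν y ^ 2)]; exact this : convG ν ν x ^ 2 ≤ (∑ y, ν y ^ 2)^2) h0]

/-- convolving by a probability measure contracts L2 -/
lemma convG_sq_le (f g : G → ℝ) (hg : ∀ x, 0 ≤ g x) (hg1 : ∑ x, g x = 1) :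
    ∑ x, convG f g x ^ 2 ≤ ∑ x, f x ^ 2 := by
  have key : ∀ x, convG f g x ^ 2 ≤ ∑ y, f y ^ 2 * g (y⁻¹ * x) := by
    intro x
    have h1 : ∑ y : G, g (y⁻¹ * x) = 1 := by
      rw [← hg1]
      refine Fintype.sum_equiv ((Equiv.inv G).trans (Equiv.mulRight x)) _ _ fun z => ?_
      simp
    have := Finset.sum_mul_sq_le_sq_mul_sq Finset.univ
      (fun y => f y * Real.sqrt (g (y⁻¹ * x))) (fun y => Real.sqrt (g (y⁻¹ * x)))
    simp only [mul_pow, Real.sq_sqrt (hg _), mul_assoc, Real.mul_self_sqrt (hg _)] at this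
    rw [h1, mul_one] at this
    exact this
  calc ∑ x, convG f g x ^ 2 ≤ ∑ x, ∑ y, f y ^ 2 * g (y⁻¹ * x) :=
        Finset.sum_le_sum fun x _ => key x
    _ = ∑ x, convG (fun y => f y ^ 2) g x := rfl
    _ = ∑ x, f x ^ 2 := by rw [convG_sum, hg1, mul_one]

lemma iterConv_set_le (μ : G → ℝ) (h : ∀ x, 0 ≤ μ x) (h1 : ∑ x, μ x = 1) (A : Finset G) (ε : ℝ)
    (hA : ∀ u, ∑ x ∈ A, μ (u * x) ≤ ε) (n : ℕ) (u : G) : ∑ x ∈ A, iterConv μ n (u * x) ≤ ε := by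
  cases n with
  | zero => exact hA u
  | succ n =>
    show ∑ x ∈ A, convG (iterConv μ n) μ (u * x) ≤ ε
    simp only [convG]
    rw [Finset.sum_comm]
    simp only [← Finset.mul_sum, ← mul_assoc]
    calc _ ≤ ∑ y, iterConv μ n y * ε := Finset.sum_le_sum fun y _ =>
          mul_le_mul_of_nonneg_left (hA _) (iterConv_nonneg μ h n y)
      _ = ε := by rw [← Finset.sum_mul, iterConv_sum μ h1, one_mul]

lemma sum_sub_unif_sq (ν : G → ℝ) (h1 : ∑ x, ν x = 1) :
    ∑ x, (ν x - (Fintype.card G : ℝ)⁻¹) ^ 2 = ∑ x, ν x ^ 2 - (Fintype.card G : ℝ)⁻¹ := by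
  have hn : (Fintype.card G : ℝ) ≠ 0 := by exact_mod_cast Fintype.card_ne_zero
  simp only [sub_sq, Finset.sum_add_distrib, Finset.sum_sub_distrib, ← Finset.sum_mul,
    ← Finset.mul_sum, h1, Finset.sum_const, Finset.card_univ, nsmul_eq_mul]
  field_simp
  ring

lemma convG_sub_unif (f g : G → ℝ) (hf : ∑ x, f x = 1) (hg : ∑ x, g x = 1) :
    convG (fun x => f x - (Fintype.card G : ℝ)⁻¹) (fun x => g x - (Fintype.card G : ℝ)⁻¹)
      = fun x => convG f g x - (Fintype.card G : ℝ)⁻¹ := by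
  have hn : (Fintype.card G : ℝ) ≠ 0 := by exact_mod_cast Fintype.card_ne_zero
  funext x
  have h1 : ∑ y : G, g (y⁻¹ * x) = 1 := by
    rw [← hg]
    refine Fintype.sum_equiv ((Equiv.inv G).trans (Equiv.mulRight x)) _ _ fun z => ?_
    simp
  simp only [convG, sub_mul, mul_sub, Finset.sum_sub_distrib, ← Finset.sum_mul,
    ← Finset.mul_sum, hf, h1, Finset.sum_const, Finset.card_univ, nsmul_eq_mul]
  field_simp
  ring

end conv

open Finset Pointwise

section bsg

lemma fiber_bound {α β : Type*} [DecidableEq β] (s : Finset α) (t : Finset β) (f : α → β) (r : ℝ)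
    (h : ∀ b ∈ t, r ≤ (#{a ∈ s | f a = b} : ℝ)) : r * (#t : ℝ) ≤ (#s : ℝ) := by
  have h1 : #{a ∈ s | f a ∈ t} = ∑ b ∈ t, #{a ∈ s.filter (fun a => f a ∈ t) | f a = b} :=
    Finset.card_eq_sum_card_fiberwise (fun a ha => by simpa using (Finset.mem_filter.1 ha).2)
  have h2 : (#{a ∈ s | f a ∈ t} : ℝ) ≤ #s := by exact_mod_cast Finset.card_filter_le _ _
  refine le_trans ?_ h2
  rw [h1]
  push_cast
  calc r * (#t : ℝ) = ∑ b ∈ t, r := by rw [Finset.sum_const, nsmul_eq_mul, mul_comm]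
    _ ≤ _ := by
      refine Finset.sum_le_sum fun b hb => (h b hb).trans ?_
      norm_cast
      refine Finset.card_le_card fun a ha => ?_
      simp only [Finset.mem_filter] at ha ⊢
      exact ⟨⟨ha.1, by rw [ha.2]; exact hb⟩, ha.2⟩

variable {G : Type*} [Group G] [DecidableEq G]

lemma bsg_graph (S : Finset G) (δ τ : ℝ) (hδ : 0 < δ) (hτ : 0 < τ) (hτδ : 32 * τ ≤ δ ^ 2)
    (hS : 0 < #S) (hQ : δ * (#S : ℝ) ^ 2 ≤ ∑ b ∈ S, (#{x ∈ S | x * b ∈ S} : ℝ)) :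
    ∃ A ⊆ S, 3 / 8 * δ * #S ≤ (#A : ℝ) ∧ (#(A * A⁻¹) : ℝ) * (δ * τ ^ 2 / 4) ≤ #S := by
  set s : ℝ := (#S : ℝ) with hs
  have hs0 : 0 < s := by rw [hs]; exact_mod_cast hS
  let N : G → Finset G := fun b => {x ∈ S | x * b ∈ S}
  let C : G → G → Finset G := fun x y => {b ∈ S | x * b ∈ S ∧ y * b ∈ S}
  let P : Finset (G × G) := {q ∈ S ×ˢ S | (#(C q.1 q.2) : ℝ) < τ * s}
  let bad : G → ℝ := fun b => (#{q ∈ P | q.1 * b ∈ S ∧ q.2 * b ∈ S} : ℝ)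
  have hbad : ∑ b ∈ S, bad b ≤ τ * s ^ 3 := by
    have := Finset.sum_card_bipartiteAbove_eq_sum_card_bipartiteBelow (s := S) (t := P)
      (fun b q => q.1 * b ∈ S ∧ q.2 * b ∈ S)
    simp only [Finset.bipartiteAbove, Finset.bipartiteBelow] at this
    have h2 : ∑ b ∈ S, bad b = ∑ q ∈ P, (#(C q.1 q.2) : ℝ) := by
      simp only [bad, C]
      exact_mod_cast this
    rw [h2]
    calc _ ≤ ∑ q ∈ P, τ * s := Finset.sum_le_sum fun q hq => (Finset.mem_filter.1 hq).2.le
      _ = #P * (τ * s) := by rw [Finset.sum_const, nsmul_eq_mul]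
      _ ≤ (s * s) * (τ * s) := by
        gcongr
        have : #P ≤ #S * #S := by
          rw [← Finset.card_product]; exact Finset.card_filter_le _ _
        rw [hs]; exact_mod_cast this
      _ = _ := by ring
  have hN2 : δ ^ 2 * s ^ 3 ≤ ∑ b ∈ S, (#(N b) : ℝ) ^ 2 := by
    have := sq_sum_le_card_mul_sum_sq (s := S) (f := fun b => (#(N b) : ℝ))
    have h3 : (δ * s ^ 2) ^ 2 ≤ (∑ b ∈ S, (#(N b) : ℝ)) ^ 2 := by
      gcongr
    have h4 := h3.trans this
    rw [← hs] at h4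
    have : s * (δ ^ 2 * s ^ 3) ≤ s * ∑ b ∈ S, (#(N b) : ℝ) ^ 2 := by
      refine le_trans (le_of_eq ?_) h4; ring
    exact le_of_mul_le_mul_left this hs0
  obtain ⟨b, hbS, hb⟩ : ∃ b ∈ S, δ ^ 2 * s ^ 2 / 2 ≤ (#(N b) : ℝ) ^ 2 - 16 * bad b := by
    apply Finset.exists_le_of_sum_le (Finset.card_pos.1 hS)
    rw [Finset.sum_sub_distrib, ← Finset.mul_sum, Finset.sum_const, nsmul_eq_mul, ← hs]
    have : 32 * τ * s ^ 3 ≤ δ ^ 2 * s ^ 3 := by gcongr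
    nlinarith
  set A0 := N b with hA0
  set n : ℝ := (#A0 : ℝ) with hn
  have hn0 : 0 ≤ n := by positivity
  have hbad0 : 0 ≤ bad b := by positivity
  have hn1 : δ * s / 2 ≤ n := by
    by_contra hlt
    push Not at hlt
    have : n ^ 2 < (δ * s / 2) ^ 2 := by gcongr
    nlinarith [sq_nonneg (δ * s)]
  have hbn : 16 * bad b ≤ n ^ 2 := by nlinarith [sq_nonneg (δ * s)]
  let B : G → Finset G := fun x => {y ∈ A0 | (#(C x y) : ℝ) < τ * s}
  have hsumB : ∑ x ∈ A0, (#(B x) : ℝ) ≤ bad b := by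
    have : (∑ x ∈ A0, #(B x)) = #(A0.sigma B) := by rw [Finset.card_sigma]
    have h2 : #(A0.sigma B) ≤ #{q ∈ P | q.1 * b ∈ S ∧ q.2 * b ∈ S} := by
      apply Finset.card_le_card_of_injOn (fun q => (q.1, q.2))
      · rintro ⟨x, y⟩ hq
        simp only [Finset.coe_sigma, Set.mem_sigma_iff, Finset.mem_coe, B, hA0, N, Finset.mem_filter, P,
          Finset.mem_product] at hq ⊢
        tauto
      · rintro ⟨x, y⟩ _ ⟨x', y'⟩ _ h
        simp only [Prod.mk.injEq] at h
        obtain ⟨rfl, rfl⟩ := h; rfl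
    simp only [bad]
    exact_mod_cast this.le.trans h2
  let A : Finset G := {x ∈ A0 | (#(B x) : ℝ) ≤ n / 4}
  have hAS : A ⊆ S := (Finset.filter_subset _ _).trans (Finset.filter_subset _ _)
  have hA : 3 / 4 * n ≤ (#A : ℝ) := by
    have h1 : (#A : ℝ) + #{x ∈ A0 | ¬ (#(B x) : ℝ) ≤ n / 4} = n := by
      rw [hn]; exact_mod_cast Finset.card_filter_add_card_filter_not _
    have h2 : (#{x ∈ A0 | ¬ (#(B x) : ℝ) ≤ n / 4} : ℝ) * (n / 4) ≤ n ^ 2 / 16 := by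
      calc _ = ∑ x ∈ A0.filter (fun x => ¬ (#(B x) : ℝ) ≤ n / 4), n / 4 := by
            rw [Finset.sum_const, nsmul_eq_mul]
        _ ≤ ∑ x ∈ A0.filter (fun x => ¬ (#(B x) : ℝ) ≤ n / 4), (#(B x) : ℝ) :=
            Finset.sum_le_sum fun x hx => (not_le.1 (Finset.mem_filter.1 hx).2).le
        _ ≤ ∑ x ∈ A0, (#(B x) : ℝ) :=
            Finset.sum_le_sum_of_subset_of_nonneg (Finset.filter_subset _ _) (fun _ _ _ => by positivity)
        _ ≤ n ^ 2 / 16 := by linarith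
    have hnpos : 0 < n := lt_of_lt_of_le (by positivity) hn1
    have h3 : (#{x ∈ A0 | ¬ (#(B x) : ℝ) ≤ n / 4} : ℝ) ≤ n / 4 := by
      by_contra hlt
      have hlt := not_le.1 hlt
      nlinarith
    linarith
  refine ⟨A, hAS, by nlinarith, ?_⟩
  -- representations
  let Q : Finset (G × G × G × G) := S ×ˢ S ×ˢ S ×ˢ S
  have hQc : (#Q : ℝ) = s ^ 4 := by
    simp only [Q, Finset.card_product, hs]; push_cast; ring
  have key := fiber_bound Q (A * A⁻¹) (fun q => q.1 * q.2.1⁻¹ * q.2.2.1 * q.2.2.2⁻¹)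
    (n / 2 * (τ * s) ^ 2) ?_
  · rw [hQc] at key
    have h5 : δ * s / 2 / 2 * (τ * s) ^ 2 * (#(A * A⁻¹) : ℝ) ≤ s ^ 4 := by
      refine le_trans ?_ key
      gcongr
    have h6 : s ^ 3 * ((#(A * A⁻¹) : ℝ) * (δ * τ ^ 2 / 4)) ≤ s ^ 3 * s := by
      refine le_trans (le_of_eq ?_) (h5.trans (le_of_eq ?_)) <;> ring
    exact le_of_mul_le_mul_left h6 (by positivity)
  · intro e he
    obtain ⟨x, hx, y', hy', rfl⟩ := Finset.mem_mul.1 he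
    obtain ⟨y, hy, rfl⟩ := Finset.mem_inv.1 hy'
    let Z : Finset G := A0 \ (B x ∪ B y)
    have hZ : n / 2 ≤ (#Z : ℝ) := by
      have h1 : #A0 ≤ #Z + #(B x ∪ B y) := by
        have := Finset.le_card_sdiff (B x ∪ B y) A0
        show _ ≤ #(A0 \ (B x ∪ B y)) + _
        omega
      have h2 := Finset.card_union_le (B x) (B y)
      have h3 : n ≤ (#Z : ℝ) + (#(B x) + #(B y)) := by
        rw [hn]; exact_mod_cast h1.trans (by omega)
      have h4 := (Finset.mem_filter.1 hx).2
      have h5 := (Finset.mem_filter.1 hy).2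
      linarith
    have hZm : ∀ z ∈ Z, z ∈ A0 ∧ τ * s ≤ (#(C x z) : ℝ) ∧ τ * s ≤ (#(C y z) : ℝ) := by
      intro z hz
      simp only [Z, B, Finset.mem_sdiff, Finset.mem_union, Finset.mem_filter, not_or, not_and, not_lt] at hz
      exact ⟨hz.1, hz.2.1 hz.1, hz.2.2 hz.1⟩
    let W := Z.sigma (fun z => C x z ×ˢ C y z)
    have hW : n / 2 * (τ * s) ^ 2 ≤ (#W : ℝ) := by
      simp only [W, Finset.card_sigma, Finset.card_product]
      push_cast
      calc n / 2 * (τ * s) ^ 2 ≤ #Z * (τ * s) ^ 2 := by gcongr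
        _ = ∑ z ∈ Z, (τ * s) ^ 2 := by rw [Finset.sum_const, nsmul_eq_mul]
        _ ≤ _ := Finset.sum_le_sum fun z hz => by
          obtain ⟨_, h1, h2⟩ := hZm z hz
          rw [sq]; gcongr
    refine hW.trans ?_
    norm_cast
    apply Finset.card_le_card_of_injOn (fun w => (x * w.2.1, w.1 * w.2.1, w.1 * w.2.2, y * w.2.2))
    · rintro ⟨z, b1, b2⟩ hw
      simp only [W, C, Finset.coe_sigma, Set.mem_sigma_iff, Finset.mem_coe, Finset.mem_filter,
        Finset.mem_product, Q] at hw ⊢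
      refine ⟨⟨hw.2.1.2.1, hw.2.1.2.2, hw.2.2.2.2, hw.2.2.2.1⟩, ?_⟩
      group
    · rintro ⟨z, b1, b2⟩ _ ⟨z', b1', b2'⟩ _ h
      simp only [Prod.mk.injEq, mul_right_inj] at h
      obtain ⟨rfl, h2, h3, rfl⟩ := h
      simp only [mul_left_inj] at h2
      subst h2; rfl

lemma bsg_group [Fintype G] (A : Finset G) (hA : A.Nonempty) (M : ℝ) (hM : 0 < M)
    (hD : (#(A * A⁻¹) : ℝ) ≤ M * #A) :
    ∃ H : Finset G, 1 ∈ H ∧ H⁻¹ = H ∧ (∃ u, (#A : ℝ) / (2 * M) ≤ #{v ∈ A | u⁻¹ * v ∈ H}) ∧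
      ∀ k : ℕ, (#(H ^ k) : ℝ) ≤ (2 * M ^ 2) ^ k * M * #A := by
  set n : ℝ := (#A : ℝ) with hn
  have hn0 : 0 < n := by rw [hn]; exact_mod_cast hA.card_pos
  let r : G → ℝ := fun z => (#{u ∈ A | u * z ∈ A} : ℝ)
  have hrn : ∀ z, r z ≤ n := fun z => by
    simp only [r, hn]; exact_mod_cast Finset.card_filter_le _ _
  have hM1 : 1 ≤ M := by
    have : n ≤ #(A * A⁻¹) := by
      rw [hn]; exact_mod_cast Finset.card_le_card_mul_right (hA.inv)
    nlinarith
  let H : Finset G := {z | n / (2 * M) ≤ r z}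
  have hr1 : r 1 = n := by simp [r, hn]
  have hrinv : ∀ z, r z⁻¹ = r z := by
    intro z
    simp only [r]
    norm_cast
    apply Finset.card_bij' (fun u _ => u * z⁻¹) (fun u _ => u * z)
    · intro a ha; simp only [Finset.mem_filter] at ha ⊢; simp [ha]
    · intro a ha; simp only [Finset.mem_filter] at ha ⊢; simp [ha]
    · intro a ha; simp
    · intro a ha; simp
  refine ⟨H, ?_, ?_, ?_, ?_⟩
  · simp only [H, Finset.mem_filter, Finset.mem_univ, true_and, hr1]
    rw [div_le_iff₀ (by positivity)]; nlinarith
  · ext z; simp [H, hrinv]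
  · -- energy
    have hE := le_card_mul_mul_mulEnergy A A⁻¹
    have hE2 : (mulEnergy A A⁻¹ : ℝ) ≤ ∑ u ∈ A, ∑ v ∈ A, r (u⁻¹ * v) := by
      simp only [r]
      norm_cast
      have : ∑ u ∈ A, ∑ v ∈ A, #{w ∈ A | w * (u⁻¹ * v) ∈ A}
          = #(A.sigma fun u => A.sigma fun v => {w ∈ A | w * (u⁻¹ * v) ∈ A}) := by
        simp only [Finset.card_sigma]
      rw [this, mulEnergy]
      apply Finset.card_le_card_of_injOn (fun q => ⟨q.2.1⁻¹, q.2.2⁻¹, q.1.1⟩)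
      · rintro ⟨⟨a1, a2⟩, b1, b2⟩ hq
        simp only [Finset.coe_filter, Finset.mem_product, Set.mem_ofPred_eq, Finset.mem_inv',
          Finset.coe_sigma, Set.mem_sigma_iff, Finset.mem_coe] at hq ⊢
        obtain ⟨⟨⟨h1, h2⟩, h3, h4⟩, h5⟩ := hq
        refine ⟨h3, h4, h1, ?_⟩
        have : a1 * (b1⁻¹⁻¹ * b2⁻¹) = a2 := by
          rw [inv_inv, ← mul_assoc, h5]; group
        rw [this]; exact h2
      · rintro ⟨⟨a1, a2⟩, b1, b2⟩ hq ⟨⟨a1', a2'⟩, b1', b2'⟩ hq' h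
        simp only [Finset.coe_filter, Set.mem_ofPred_eq] at hq hq'
        have h1 := congrArg Sigma.fst h
        simp only [inv_inj] at h1
        subst h1
        have h2 := eq_of_heq (Sigma.mk.inj h).2
        have h3 := congrArg Sigma.fst h2
        simp only [inv_inj] at h3
        subst h3
        have h4 := eq_of_heq (Sigma.mk.inj h2).2
        simp only at h4
        subst h4
        have := hq.2.symm.trans hq'.2
        simp only [mul_left_inj] at this
        subst this; rfl
    have hE3 : n ^ 3 / M ≤ ∑ u ∈ A, ∑ v ∈ A, r (u⁻¹ * v) := by
      have h1 : n ^ 4 ≤ M * n * ∑ u ∈ A, ∑ v ∈ A, r (u⁻¹ * v) := by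
        have h2 : n ^ 2 * n ^ 2 ≤ (#(A * A⁻¹) : ℝ) * (mulEnergy A A⁻¹ : ℝ) := by
          rw [Finset.card_inv] at hE
          rw [hn]; exact_mod_cast hE
        calc n ^ 4 = n ^ 2 * n ^ 2 := by ring
          _ ≤ _ := h2
          _ ≤ _ := by gcongr
      rw [div_le_iff₀ hM]
      have : n * n ^ 3 ≤ n * ((∑ u ∈ A, ∑ v ∈ A, r (u⁻¹ * v)) * M) := by
        refine le_trans (le_of_eq ?_) (h1.trans (le_of_eq ?_)) <;> ring
      exact le_of_mul_le_mul_left this hn0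
    obtain ⟨u, huA, hu⟩ : ∃ u ∈ A, n ^ 2 / M ≤ ∑ v ∈ A, r (u⁻¹ * v) := by
      apply Finset.exists_le_of_sum_le hA
      rw [Finset.sum_const, nsmul_eq_mul, ← hn]
      refine le_trans (le_of_eq ?_) hE3
      ring
    refine ⟨u, ?_⟩
    have hsplit := Finset.sum_filter_add_sum_filter_not A (fun v => u⁻¹ * v ∈ H) (fun v => r (u⁻¹ * v))
    have h1 : ∑ v ∈ A.filter (fun v => u⁻¹ * v ∈ H), r (u⁻¹ * v) ≤ #{v ∈ A | u⁻¹ * v ∈ H} * n := by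
      rw [← nsmul_eq_mul, ← Finset.sum_const]
      exact Finset.sum_le_sum fun v _ => hrn _
    have h2 : ∑ v ∈ A.filter (fun v => ¬ u⁻¹ * v ∈ H), r (u⁻¹ * v) ≤ n * (n / (2 * M)) := by
      calc _ ≤ ∑ v ∈ A.filter (fun v => ¬ u⁻¹ * v ∈ H), n / (2 * M) := by
            refine Finset.sum_le_sum fun v hv => ?_
            have := (Finset.mem_filter.1 hv).2
            simp only [H, Finset.mem_filter, Finset.mem_univ, true_and, not_le] at this
            exact this.le
        _ = #{v ∈ A | ¬ u⁻¹ * v ∈ H} * (n / (2 * M)) := by rw [Finset.sum_const, nsmul_eq_mul]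
        _ ≤ _ := by
          gcongr
          rw [hn]; exact_mod_cast Finset.card_filter_le _ _
    have h3 : n * (n / (2 * M)) + n * (n / (2 * M)) = n ^ 2 / M := by field_simp; ring
    have h4 : (n / (2 * M)) * n ≤ #{v ∈ A | u⁻¹ * v ∈ H} * n := by linarith
    exact le_of_mul_le_mul_right h4 hn0
  · intro k
    have hX : ∀ k : ℕ, (#(A * H ^ k * A⁻¹) : ℝ) ≤ (2 * M ^ 2) ^ k * M * n := by
      intro k
      induction k with
      | zero => simpa using hD
      | succ k ih =>
        have key := fiber_bound ((A * A⁻¹) ×ˢ (A * H ^ k * A⁻¹)) (A * H ^ (k + 1) * A⁻¹)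
          (fun q => q.1 * q.2) (n / (2 * M)) ?_
        · rw [Finset.card_product] at key
          push_cast at key
          have h1 : n / (2 * M) * (#(A * H ^ (k + 1) * A⁻¹) : ℝ) ≤ (M * n) * ((2 * M ^ 2) ^ k * M * n) := by
            refine key.trans ?_
            gcongr
          have h2 : n / (2 * M) * (#(A * H ^ (k + 1) * A⁻¹) : ℝ)
              ≤ n / (2 * M) * ((2 * M ^ 2) ^ (k + 1) * M * n) := by
            refine h1.trans (le_of_eq ?_)
            field_simp
            ring
          exact le_of_mul_le_mul_left h2 (by positivity)
        · intro e he
          rw [pow_succ'] at he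
          obtain ⟨e1, he1, y', hy', rfl⟩ := Finset.mem_mul.1 he
          obtain ⟨x, hx, zw, hzw, rfl⟩ := Finset.mem_mul.1 he1
          obtain ⟨z, hz, w, hw, rfl⟩ := Finset.mem_mul.1 hzw
          have hz' : n / (2 * M) ≤ r z := by simpa [H] using hz
          refine hz'.trans ?_
          simp only [r]
          norm_cast
          apply Finset.card_le_card_of_injOn (fun u => (x * u⁻¹, u * z * w * y'))
          · intro u hu
            simp only [Finset.coe_filter, Set.mem_ofPred_eq, Finset.mem_product] at hu ⊢
            refine ⟨⟨Finset.mul_mem_mul hx (Finset.inv_mem_inv hu.1),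
              Finset.mul_mem_mul (Finset.mul_mem_mul hu.2 hw) hy'⟩, ?_⟩
            group
          · intro u _ u' _ h
            simp only [Prod.mk.injEq, mul_right_inj, inv_inj] at h
            exact h.1
    refine le_trans ?_ (hX k)
    norm_cast
    exact (Finset.card_le_card_mul_left hA).trans (Finset.card_le_card_mul_right hA.inv)


set_option maxHeartbeats 400000 in
lemma bsg_main [Fintype G] (η : G → ℝ) (a M : ℝ) (ha : 0 < a) (hM : 64 ≤ M)
    (h0 : ∀ x, 0 ≤ η x) (h1 : ∑ x, η x = 1) (hmax : ∀ x, η x ≤ a)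
    (hE : a / M ≤ ∑ x, ∑ b, η x * η b * η (x * b)) :
    ∃ H : Finset G, 1 ∈ H ∧ H⁻¹ = H ∧ (#H : ℝ) * a ≤ M ^ 90 ∧ (#(H ^ 34) : ℝ) ≤ M ^ 2000 * #H ∧
      ∃ u, 1 ≤ M ^ 39 * ∑ x ∈ H, η (u * x) := by
  have hM0 : 0 < M := by linarith
  let t := a / (4 * M)
  have ht : 0 < t := by positivity
  let S : Finset G := {x | t ≤ η x}
  have hmem : ∀ x, x ∈ S ↔ t ≤ η x := fun x => by simp [S]
  set s : ℝ := (#S : ℝ) with hs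
  have hs1 : s * t ≤ 1 := by
    rw [hs, ← nsmul_eq_mul, ← Finset.sum_const, ← h1]
    calc _ ≤ ∑ x ∈ S, η x := Finset.sum_le_sum fun x hx => (hmem x).1 hx
      _ ≤ _ := Finset.sum_le_sum_of_subset_of_nonneg (Finset.subset_univ _) fun x _ _ => h0 x
  let Q : ℝ := ∑ b ∈ S, (#{x ∈ S | x * b ∈ S} : ℝ)
  have hQs : Q ≤ s * s := by
    calc Q ≤ ∑ b ∈ S, s := Finset.sum_le_sum fun b _ => by
            rw [hs]; exact_mod_cast Finset.card_filter_le _ _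
      _ = _ := by rw [Finset.sum_const, nsmul_eq_mul]
  have hQ : t ≤ a ^ 3 * Q := by
    have hpt : ∀ x b, η x * η b * η (x * b) ≤
        (if b ∈ S then (if x ∈ S ∧ x * b ∈ S then a ^ 3 else 0) else 0)
        + t * (η b * η (x * b)) + t * (η x * η (x * b)) + t * (η x * η b) := by
      intro x b
      have hx := h0 x
      have hb := h0 b
      have hxb := h0 (x * b)
      have e1 := mul_nonneg hb hxb
      have e2 := mul_nonneg hx hxb
      have e3 := mul_nonneg hx hb
      have f1 := mul_nonneg ht.le e1
      have f2 := mul_nonneg ht.le e2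
      have f3 := mul_nonneg ht.le e3
      by_cases hb' : b ∈ S
      · by_cases hx' : x ∈ S ∧ x * b ∈ S
        · rw [if_pos hb', if_pos hx']
          have : η x * η b * η (x * b) ≤ a * a * a := by
            gcongr <;> apply hmax
          nlinarith
        · rw [if_pos hb', if_neg hx']
          rw [not_and_or, hmem, hmem, not_le, not_le] at hx'
          rcases hx' with hx' | hx'
          · nlinarith [mul_le_mul_of_nonneg_right hx'.le e1]
          · nlinarith [mul_le_mul_of_nonneg_right hx'.le e3]
      · rw [if_neg hb']
        rw [hmem, not_le] at hb'
        nlinarith [mul_le_mul_of_nonneg_right hb'.le e2]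
    have hsum := hE.trans (Finset.sum_le_sum fun x _ => Finset.sum_le_sum fun b _ => hpt x b)
    simp only [Finset.sum_add_distrib, ← Finset.mul_sum] at hsum
    have g1 : ∑ x, ∑ b, η b * η (x * b) = 1 := by
      rw [Finset.sum_comm]
      simp only [← Finset.mul_sum]
      rw [← h1]
      refine Finset.sum_congr rfl fun b _ => ?_
      have : ∑ x, η (x * b) = 1 := by
        rw [← h1]; exact Fintype.sum_equiv (Equiv.mulRight b) _ _ fun z => rfl
      rw [this, mul_one]
    have g2 : ∑ x, η x * ∑ b, η (x * b) = 1 := by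
      rw [← h1]
      refine Finset.sum_congr rfl fun b _ => ?_
      have : ∑ x, η (b * x) = 1 := by
        rw [← h1]; exact Fintype.sum_equiv (Equiv.mulLeft b) _ _ fun z => rfl
      rw [this, mul_one]
    have g3 : ∑ x, η x * ∑ b, η b = 1 := by
      rw [h1]; simp [h1]
    rw [g1, g2, g3] at hsum
    have g4 : ∑ x, ∑ b, (if b ∈ S then (if x ∈ S ∧ x * b ∈ S then a ^ 3 else 0) else 0) = a ^ 3 * Q := by
      rw [Finset.sum_comm]
      have : ∀ b, ∑ x, (if b ∈ S then (if x ∈ S ∧ x * b ∈ S then a ^ 3 else 0) else 0)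
          = if b ∈ S then a ^ 3 * (#{x ∈ S | x * b ∈ S} : ℝ) else 0 := by
        intro b
        split_ifs
        · rw [← Finset.sum_filter, Finset.sum_const, nsmul_eq_mul, mul_comm]
          congr 3
          ext x; simp
        · simp
      simp only [this, Q]
      rw [← Finset.sum_filter, Finset.mul_sum]
      refine Finset.sum_congr ?_ fun _ _ => rfl
      ext x; simp
    rw [g4] at hsum
    have : a / M = 4 * t := by simp only [t]; field_simp
    linarith
  have hQ0 : 0 ≤ Q := Finset.sum_nonneg fun _ _ => Nat.cast_nonneg _
  have hQdef : Q = ∑ b ∈ S, (#{x ∈ S | x * b ∈ S} : ℝ) := rfl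
  have htdef : t = a / (4 * M) := rfl
  clear_value Q t S s
  have hsa : s * a ≤ 4 * M := by
    have : s * t = s * a / (4 * M) := by rw [htdef]; ring
    rw [this, div_le_one (by positivity)] at hs1; exact hs1
  have hQ' : 1 ≤ 4 * M * (a ^ 2 * Q) := by
    have : t = a * (1 / (4 * M)) := by rw [htdef]; ring
    rw [this] at hQ
    have h2 : a * (1 / (4 * M)) ≤ a * (a ^ 2 * Q) := by nlinarith
    have h3 := le_of_mul_le_mul_left h2 ha
    rw [div_le_iff₀ (by positivity)] at h3
    linarith
  have hs00 : 0 ≤ s := by rw [hs]; positivity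
  have hlow : 1 ≤ M ^ 2 * (s * a) := by
    by_contra hlt
    have hlt := not_le.1 hlt
    have h2 : 4 * M * (a ^ 2 * Q) ≤ 4 * M * (s * a) ^ 2 := by
      have : a ^ 2 * Q ≤ a ^ 2 * (s * s) := by gcongr
      nlinarith
    have h3 : (M ^ 2 * (s * a)) ^ 2 < 1 := by
      rw [sq_lt_one_iff₀ (by positivity)]; exact hlt
    have h4 : M ^ 4 * (s * a) ^ 2 < 1 := by nlinarith
    have h5 : 4 * M ≤ M ^ 4 := by
      have : 4 ≤ M ^ 3 := by nlinarith [sq_nonneg M, mul_pos hM0 hM0]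
      nlinarith
    have h6 : 4 * M * (s * a) ^ 2 ≤ M ^ 4 * (s * a) ^ 2 := by gcongr
    linarith
  have hspos : 0 < s := by
    rcases hs00.lt_or_eq with h | h
    · exact h
    · rw [← h] at hlow; norm_num at hlow
  have hSpos : 0 < #S := by rw [hs] at hspos; exact_mod_cast hspos
  have hQδ : (M ^ 4)⁻¹ * s ^ 2 ≤ Q := by
    have h2 : (s * a) ^ 2 ≤ (4 * M) ^ 2 := by gcongr
    have h3 : (s * a) ^ 2 ≤ 64 * M ^ 3 * (a ^ 2 * Q) := by nlinarith [sq_nonneg M]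
    have h4 : s ^ 2 ≤ 64 * M ^ 3 * Q := by
      have : a ^ 2 * s ^ 2 ≤ a ^ 2 * (64 * M ^ 3 * Q) := by nlinarith
      exact le_of_mul_le_mul_left this (by positivity)
    have h5 : 64 * M ^ 3 * Q ≤ M ^ 4 * Q := by
      gcongr; nlinarith [pow_pos hM0 3]
    rw [inv_mul_le_iff₀ (by positivity)]
    linarith
  obtain ⟨A, hAS, hA1, hA2⟩ := bsg_graph S (M ^ 4)⁻¹ (M ^ 9)⁻¹ (by positivity) (by positivity) (by
    rw [← div_eq_mul_inv, div_le_iff₀ (by positivity)]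
    have : ((M ^ 4)⁻¹) ^ 2 * M ^ 9 = M := by field_simp
    rw [this]; linarith) hSpos (by rw [← hQdef, ← hs]; exact hQδ)
  rw [← hs] at hA1 hA2
  have hA3 : s ≤ M ^ 5 * #A := by
    have h2 : s ≤ 8 / 3 * M ^ 4 * #A := by
      have : 8 / 3 * M ^ 4 * (3 / 8 * (M ^ 4)⁻¹ * s) = s := by field_simp
      calc s = 8 / 3 * M ^ 4 * (3 / 8 * (M ^ 4)⁻¹ * s) := this.symm
        _ ≤ _ := by gcongr
    refine h2.trans ?_
    gcongr
    have : 0 < M ^ 4 := by positivity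
    nlinarith
  have hA4 : (#(A * A⁻¹) : ℝ) ≤ M ^ 28 * #A := by
    have h2 : (#(A * A⁻¹) : ℝ) ≤ 4 * M ^ 22 * s := by
      have : 4 * M ^ 22 * ((#(A * A⁻¹) : ℝ) * ((M ^ 4)⁻¹ * (M ^ 9)⁻¹ ^ 2 / 4)) = #(A * A⁻¹) := by
        field_simp
      calc (#(A * A⁻¹) : ℝ) = 4 * M ^ 22 * ((#(A * A⁻¹) : ℝ) * ((M ^ 4)⁻¹ * (M ^ 9)⁻¹ ^ 2 / 4)) := this.symm
        _ ≤ _ := by gcongr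
    calc _ ≤ 4 * M ^ 22 * s := h2
      _ ≤ M * M ^ 22 * (M ^ 5 * #A) := by gcongr; linarith
      _ = _ := by ring
  have hApos : 0 < (#A : ℝ) := by
    by_contra hlt
    have : (#A : ℝ) = 0 := le_antisymm (not_lt.1 hlt) (by positivity)
    rw [this] at hA3; linarith
  have hAne : A.Nonempty := Finset.card_pos.1 (by exact_mod_cast hApos)
  obtain ⟨H, hH1, hH2, ⟨u, hu⟩, hH4⟩ := bsg_group A hAne (M ^ 28) (by positivity) hA4
  have hM1 : 1 ≤ M := by linarith
  have h2M : 2 * M ^ 28 ≤ M ^ 29 := by rw [pow_succ]; nlinarith [pow_pos hM0 28]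
  have h2M' : 2 * (M ^ 28) ^ 2 ≤ M ^ 57 := by
    rw [← pow_mul, pow_succ M 56]; norm_num; nlinarith [pow_pos hM0 56]
  have hu' : (#A : ℝ) ≤ M ^ 29 * #{v ∈ A | u⁻¹ * v ∈ H} := by
    rw [div_le_iff₀ (by positivity)] at hu
    refine hu.trans ?_
    rw [mul_comm]; gcongr
  have huH : #{v ∈ A | u⁻¹ * v ∈ H} ≤ #H := by
    apply Finset.card_le_card_of_injOn (fun v => u⁻¹ * v)
    · intro v hv; simpa using (Finset.mem_filter.1 hv).2
    · intro v _ v' _ h; simpa using h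
  have hAs : (#A : ℝ) ≤ s := by rw [hs]; exact_mod_cast Finset.card_le_card hAS
  have hMbig : 4 * M ≤ M ^ 2 := by nlinarith
  refine ⟨H, hH1, hH2, ?_, ?_, u, ?_⟩
  · have h3 := hH4 1
    rw [pow_one, pow_one] at h3
    calc (#H : ℝ) * a ≤ (2 * (M ^ 28) ^ 2 * M ^ 28 * #A) * a := by gcongr
      _ ≤ (M ^ 57 * M ^ 28 * s) * a := by gcongr
      _ = M ^ 85 * (s * a) := by ring
      _ ≤ M ^ 85 * (M ^ 2) := by gcongr; linarith
      _ = M ^ 87 := by ring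
      _ ≤ M ^ 90 := by gcongr <;> first | assumption | norm_num
  · calc (#(H ^ 34) : ℝ) ≤ (2 * (M ^ 28) ^ 2) ^ 34 * M ^ 28 * #A := hH4 34
      _ ≤ (M ^ 57) ^ 34 * M ^ 28 * (M ^ 29 * #H) := by
        gcongr
        refine hu'.trans ?_
        gcongr
      _ = M ^ 1995 * #H := by ring
      _ ≤ M ^ 2000 * #H := by gcongr <;> first | assumption | norm_num
  · have h3 : t * #{v ∈ A | u⁻¹ * v ∈ H} ≤ ∑ x ∈ H, η (u * x) := by
      calc t * (#{v ∈ A | u⁻¹ * v ∈ H} : ℝ) = ∑ v ∈ A.filter (fun v => u⁻¹ * v ∈ H), t := by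
            rw [Finset.sum_const, nsmul_eq_mul, mul_comm]
        _ ≤ ∑ v ∈ A.filter (fun v => u⁻¹ * v ∈ H), η (u * (u⁻¹ * v)) := by
            refine Finset.sum_le_sum fun v hv => ?_
            rw [mul_inv_cancel_left]
            exact (hmem v).1 (hAS (Finset.mem_filter.1 hv).1)
        _ = ∑ x ∈ (A.filter (fun v => u⁻¹ * v ∈ H)).image (fun v => u⁻¹ * v), η (u * x) := by
            rw [Finset.sum_image]
            intro v _ v' _ h; simpa using h
        _ ≤ _ := by
            refine Finset.sum_le_sum_of_subset_of_nonneg ?_ fun x _ _ => h0 _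
            intro x hx
            obtain ⟨v, hv, rfl⟩ := Finset.mem_image.1 hx
            exact (Finset.mem_filter.1 hv).2
    calc 1 ≤ M ^ 2 * (s * a) := hlow
      _ ≤ M ^ 2 * ((M ^ 5 * (M ^ 29 * #{v ∈ A | u⁻¹ * v ∈ H})) * a) := by
        gcongr
        exact hA3.trans (by gcongr)
      _ = M ^ 36 * (4 * M) * (t * #{v ∈ A | u⁻¹ * v ∈ H}) := by
        rw [htdef]; field_simp
      _ ≤ M ^ 36 * M ^ 2 * ∑ x ∈ H, η (u * x) := by gcongr
      _ = M ^ 38 * ∑ x ∈ H, η (u * x) := by ring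
      _ ≤ _ := by
        gcongr
        · exact Finset.sum_nonneg fun x _ => h0 _
        · norm_num

end bsg

open Finset Pointwise

section alg
variable {F : Type*} [Field F]

local notation "SLF" => Matrix.SpecialLinearGroup (Fin 2) F

lemma sl_det (g : SLF) : g.1 0 0 * g.1 1 1 - g.1 0 1 * g.1 1 0 = 1 := by
  have := g.2; rwa [Matrix.det_fin_two] at this

lemma sl_m00 (g h : SLF) : (g * h).1 0 0 = g.1 0 0 * h.1 0 0 + g.1 0 1 * h.1 1 0 := by
  show (g.1 * h.1) 0 0 = _
  rw [Matrix.mul_apply, Fin.sum_univ_two]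
lemma sl_m01 (g h : SLF) : (g * h).1 0 1 = g.1 0 0 * h.1 0 1 + g.1 0 1 * h.1 1 1 := by
  show (g.1 * h.1) 0 1 = _
  rw [Matrix.mul_apply, Fin.sum_univ_two]
lemma sl_m10 (g h : SLF) : (g * h).1 1 0 = g.1 1 0 * h.1 0 0 + g.1 1 1 * h.1 1 0 := by
  show (g.1 * h.1) 1 0 = _
  rw [Matrix.mul_apply, Fin.sum_univ_two]
lemma sl_m11 (g h : SLF) : (g * h).1 1 1 = g.1 1 0 * h.1 0 1 + g.1 1 1 * h.1 1 1 := by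
  show (g.1 * h.1) 1 1 = _
  rw [Matrix.mul_apply, Fin.sum_univ_two]
lemma sl_i00 (g : SLF) : (g⁻¹).1 0 0 = g.1 1 1 := by
  show (Matrix.adjugate g.1) 0 0 = _
  simp [Matrix.adjugate_fin_two]
lemma sl_i01 (g : SLF) : (g⁻¹).1 0 1 = - g.1 0 1 := by
  show (Matrix.adjugate g.1) 0 1 = _
  simp [Matrix.adjugate_fin_two]
lemma sl_i10 (g : SLF) : (g⁻¹).1 1 0 = - g.1 1 0 := by
  show (Matrix.adjugate g.1) 1 0 = _
  simp [Matrix.adjugate_fin_two]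
lemma sl_i11 (g : SLF) : (g⁻¹).1 1 1 = g.1 0 0 := by
  show (Matrix.adjugate g.1) 1 1 = _
  simp [Matrix.adjugate_fin_two]
lemma sl_o00 : (1 : SLF).1 0 0 = 1 := by
  show (1 : Matrix (Fin 2) (Fin 2) F) 0 0 = 1; simp
lemma sl_o01 : (1 : SLF).1 0 1 = 0 := by
  show (1 : Matrix (Fin 2) (Fin 2) F) 0 1 = 0; simp
lemma sl_o10 : (1 : SLF).1 1 0 = 0 := by
  show (1 : Matrix (Fin 2) (Fin 2) F) 1 0 = 0; simp
lemma sl_o11 : (1 : SLF).1 1 1 = 1 := by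
  show (1 : Matrix (Fin 2) (Fin 2) F) 1 1 = 1; simp

lemma sl_ext {g h : SLF} (h00 : g.1 0 0 = h.1 0 0) (h01 : g.1 0 1 = h.1 0 1)
    (h10 : g.1 1 0 = h.1 1 0) (h11 : g.1 1 1 = h.1 1 1) : g = h := by
  apply Subtype.ext
  ext i j
  fin_cases i <;> fin_cases j <;> assumption

/-- trace -/
def trc (g : SLF) : F := g.1 0 0 + g.1 1 1

/-- quadratic form vanishing at eigenvectors -/
def qf (g : SLF) (m n : F) : F := g.1 0 1 * n ^ 2 + (g.1 0 0 - g.1 1 1) * m * n - g.1 1 0 * m ^ 2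

/-- g fixes the vector (m,n) -/
def fixv (g : SLF) (m n : F) : Prop :=
  g.1 0 0 * m + g.1 0 1 * n = m ∧ g.1 1 0 * m + g.1 1 1 * n = n

lemma trc_inv (g : SLF) : trc g⁻¹ = trc g := by
  simp only [trc, sl_i00, sl_i11]; ring

lemma trc_conj (g h : SLF) : trc (g * h * g⁻¹) = trc h := by
  have := sl_det g
  simp only [trc, sl_i00, sl_i11, sl_i01, sl_i10, sl_m00, sl_m01, sl_m10, sl_m11]
  linear_combination (h.1 0 0 + h.1 1 1) * this

lemma comm_entries {g h : SLF} : g * h = h * g ↔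
    (g.1 0 1 * h.1 1 0 = h.1 0 1 * g.1 1 0 ∧
    (g.1 0 0 - g.1 1 1) * h.1 0 1 = (h.1 0 0 - h.1 1 1) * g.1 0 1 ∧
    (g.1 0 0 - g.1 1 1) * h.1 1 0 = (h.1 0 0 - h.1 1 1) * g.1 1 0) := by
  constructor
  · intro e
    have e00 := congrArg (fun x : SLF => x.1 0 0) e
    have e01 := congrArg (fun x : SLF => x.1 0 1) e
    have e10 := congrArg (fun x : SLF => x.1 1 0) e
    simp only [sl_m00, sl_m01, sl_m10] at e00 e01 e10
    refine ⟨by linear_combination e00, by linear_combination e01, by linear_combination -e10⟩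
  · rintro ⟨e1, e2, e3⟩
    apply sl_ext <;> simp only [sl_m00, sl_m01, sl_m10, sl_m11]
    · linear_combination e1
    · linear_combination e2
    · linear_combination -e3
    · linear_combination -e1

/-- nonscalar -/
lemma scalar_of_entries {g : SLF} (h1 : g.1 0 1 = 0) (h2 : g.1 1 0 = 0) (h3 : g.1 0 0 = g.1 1 1) :
    trc g ^ 2 = 4 := by
  have := sl_det g
  rw [h1, h2, h3] at this
  simp only [trc, h3]
  linear_combination 4 * this

lemma comm_trans' {w h a : SLF} (hw : ¬ (w.1 0 1 = 0 ∧ w.1 1 0 = 0 ∧ w.1 0 0 = w.1 1 1))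
    (h1 : w * h = h * w) (h2 : w * a = a * w) : h * a = a * h := by
  rw [comm_entries] at *
  generalize w.1 0 0 = w00 at *
  generalize w.1 0 1 = w01 at *
  generalize w.1 1 0 = w10 at *
  generalize w.1 1 1 = w11 at *
  generalize h.1 0 0 = h00 at *
  generalize h.1 0 1 = h01 at *
  generalize h.1 1 0 = h10 at *
  generalize h.1 1 1 = h11 at *
  generalize a.1 0 0 = a00 at *
  generalize a.1 0 1 = a01 at *
  generalize a.1 1 0 = a10 at *
  generalize a.1 1 1 = a11 at *
  obtain ⟨e1, e2, e3⟩ := h1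
  obtain ⟨f1, f2, f3⟩ := h2
  by_cases c1 : w01 = 0
  · by_cases c2 : w10 = 0
    · have c3 : w00 - w11 ≠ 0 := fun h => hw ⟨c1, c2, by linear_combination h⟩
      subst c1 c2
      have k1 : h01 = 0 := by
        apply mul_left_cancel₀ c3; linear_combination e2
      have k2 : h10 = 0 := by
        apply mul_left_cancel₀ c3; linear_combination e3
      have k3 : a01 = 0 := by
        apply mul_left_cancel₀ c3; linear_combination f2
      have k4 : a10 = 0 := by
        apply mul_left_cancel₀ c3; linear_combination f3
      subst k1 k2 k3 k4
      simp
    · refine ⟨?_, ?_, ?_⟩ <;> apply mul_left_cancel₀ (mul_ne_zero c2 c2)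
      · grind
      · grind
      · grind
  · refine ⟨?_, ?_, ?_⟩ <;> apply mul_left_cancel₀ (mul_ne_zero c1 c1)
    · grind
    · grind
    · grind

/-- in a torus, trace determines the element up to inverse -/
lemma torus_trace {h w v : SLF} (hh : trc h ^ 2 ≠ 4) (h2 : (2 : F) ≠ 0) (h1 : h * w = w * h) (h2' : h * v = v * h)
    (ht : trc w = trc v) : v = w ∨ v = w⁻¹ := by
  have hd := sl_det h
  have wd := sl_det w
  have vd := sl_det v
  rw [comm_entries] at h1 h2'
  obtain ⟨e1, e2, e3⟩ := h1
  obtain ⟨f1, f2, f3⟩ := h2'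
  have hD : (h.1 0 0 - h.1 1 1) ^ 2 + 4 * h.1 0 1 * h.1 1 0 ≠ 0 := by
    intro h0; apply hh; simp only [trc]; linear_combination h0 + 4 * hd
  have key : v.1 0 0 = w.1 0 0 ∧ v.1 0 1 = w.1 0 1 ∧ v.1 1 0 = w.1 1 0 ∧ v.1 1 1 = w.1 1 1 ∨
     v.1 0 0 = w.1 1 1 ∧ v.1 0 1 = - w.1 0 1 ∧ v.1 1 0 = - w.1 1 0 ∧ v.1 1 1 = w.1 0 0 := by
    simp only [trc] at ht
    generalize w.1 0 0 = w00 at *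
    generalize w.1 0 1 = w01 at *
    generalize w.1 1 0 = w10 at *
    generalize w.1 1 1 = w11 at *
    generalize h.1 0 0 = h00 at *
    generalize h.1 0 1 = h01 at *
    generalize h.1 1 0 = h10 at *
    generalize h.1 1 1 = h11 at *
    generalize v.1 0 0 = a00 at *
    generalize v.1 0 1 = a01 at *
    generalize v.1 1 0 = a10 at *
    generalize v.1 1 1 = a11 at *
    obtain ⟨x, hx⟩ : ∃ x, x = a00 - a11 := ⟨_, rfl⟩
    obtain ⟨y, hy⟩ : ∃ y, y = w00 - w11 := ⟨_, rfl⟩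
    obtain ⟨d, hd'⟩ : ∃ d, d = h00 - h11 := ⟨_, rfl⟩
    rw [← hx] at f2 f3
    rw [← hy] at e2 e3
    rw [← hd'] at e2 e3 f2 f3 hD
    obtain ⟨D, hDD⟩ : ∃ D, D = d ^ 2 + 4 * h01 * h10 := ⟨_, rfl⟩
    rw [← hDD] at hD
    obtain ⟨L, hL⟩ : ∃ L, L = x * d + 2 * a01 * h10 + 2 * a10 * h01 := ⟨_, rfl⟩
    obtain ⟨M, hM⟩ : ∃ M, M = y * d + 2 * w01 * h10 + 2 * w10 * h01 := ⟨_, rfl⟩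
    have L1 : D * x = L * d := by rw [hDD, hL]; linear_combination (-2 * h10) * f2 + (-2 * h01) * f3
    have L2 : D * a01 = L * h01 := by rw [hDD, hL]; linear_combination d * f2 - 2 * h01 * f1
    have L3 : D * a10 = L * h10 := by rw [hDD, hL]; linear_combination d * f3 + 2 * h10 * f1
    have M1 : D * y = M * d := by rw [hDD, hM]; linear_combination (-2 * h10) * e2 + (-2 * h01) * e3
    have M2 : D * w01 = M * h01 := by rw [hDD, hM]; linear_combination d * e2 - 2 * h01 * e1
    have M3 : D * w10 = M * h10 := by rw [hDD, hM]; linear_combination d * e3 + 2 * h10 * e1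
    have dx : x ^ 2 + 4 * a01 * a10 = y ^ 2 + 4 * w01 * w10 := by
      rw [hx, hy]; linear_combination (-(w00 + w11 + a00 + a11)) * ht + 4 * wd - 4 * vd
    have LM : L ^ 2 = M ^ 2 := by
      apply mul_right_cancel₀ hD
      have e1 : L ^ 2 * D = D ^ 2 * (x ^ 2 + 4 * a01 * a10) := by
        have : D ^ 2 * (x ^ 2 + 4 * a01 * a10) = (D * x) ^ 2 + 4 * (D * a01) * (D * a10) := by ring
        rw [this, L1, L2, L3, hDD]; ring
      have e2 : M ^ 2 * D = D ^ 2 * (y ^ 2 + 4 * w01 * w10) := by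
        have : D ^ 2 * (y ^ 2 + 4 * w01 * w10) = (D * y) ^ 2 + 4 * (D * w01) * (D * w10) := by ring
        rw [this, M1, M2, M3, hDD]; ring
      rw [e1, e2, dx]
    rcases sq_eq_sq_iff_eq_or_eq_neg.1 LM with LM | LM
    · left
      have k1 : x = y := mul_left_cancel₀ hD (by rw [L1, M1, LM])
      refine ⟨mul_left_cancel₀ h2 ?_, mul_left_cancel₀ hD (by rw [L2, M2, LM]),
        mul_left_cancel₀ hD (by rw [L3, M3, LM]), mul_left_cancel₀ h2 ?_⟩
      · linear_combination -ht + k1 - hx + hy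
      · linear_combination -ht - k1 + hx - hy
    · right
      have k1 : x = -y := mul_left_cancel₀ hD (by rw [mul_neg, L1, M1, LM]; ring)
      refine ⟨mul_left_cancel₀ h2 ?_, mul_left_cancel₀ hD (by rw [mul_neg, L2, M2, LM]; ring),
        mul_left_cancel₀ hD (by rw [mul_neg, L3, M3, LM]; ring), mul_left_cancel₀ h2 ?_⟩
      · linear_combination -ht + k1 - hx - hy
      · linear_combination -ht - k1 + hx + hy
  rcases key with ⟨a, b, c, d⟩ | ⟨a, b, c, d⟩
  · left; exact sl_ext a b c d
  · right; apply sl_ext <;> simp only [sl_i00, sl_i01, sl_i10, sl_i11] <;> assumption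
end alg

open Finset Pointwise

section alg2
variable {F : Type*} [Field F]

local notation "SLF" => Matrix.SpecialLinearGroup (Fin 2) F

lemma qf_inv (g : SLF) (m n : F) : qf g⁻¹ m n = - qf g m n := by
  simp only [qf, sl_i00, sl_i01, sl_i10, sl_i11]; ring

lemma par_exists {m n a b : F} (h : m ≠ 0 ∨ n ≠ 0) (e : a * n = b * m) : ∃ l, a = l * m ∧ b = l * n := by
  rcases h with h | h
  · refine ⟨a / m, by field_simp, ?_⟩
    field_simp; linear_combination -e
  · refine ⟨b / n, ?_, by field_simp⟩
    field_simp; linear_combination e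

lemma qf_eig {g : SLF} {m n : F} (h : m ≠ 0 ∨ n ≠ 0) (e : qf g m n = 0) :
    ∃ l, g.1 0 0 * m + g.1 0 1 * n = l * m ∧ g.1 1 0 * m + g.1 1 1 * n = l * n := by
  apply par_exists h
  simp only [qf] at e
  linear_combination e

lemma qf_mul {g k : SLF} {m n : F} (h : m ≠ 0 ∨ n ≠ 0) (e : qf g m n = 0) (e' : qf k m n = 0) :
    qf (g * k) m n = 0 := by
  obtain ⟨l, h1, h2⟩ := qf_eig h e'
  simp only [qf, sl_m00, sl_m01, sl_m10, sl_m11] at *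
  linear_combination (n * g.1 0 0 - m * g.1 1 0) * h1 + (n * g.1 0 1 - m * g.1 1 1) * h2 + l * e

lemma two_fix {g : SLF} {m n a b : F} (h1 : fixv g m n) (h2 : fixv g a b) (h : m * b - n * a ≠ 0) :
    g = 1 := by
  obtain ⟨e1, e2⟩ := h1
  obtain ⟨f1, f2⟩ := h2
  apply sl_ext <;> simp only [sl_o00, sl_o01, sl_o10, sl_o11] <;> apply mul_left_cancel₀ h
  · linear_combination b * e1 - n * f1
  · linear_combination -a * e1 + m * f1
  · linear_combination b * e2 - n * f2
  · linear_combination -a * e2 + m * f2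

lemma fixv_inv {g : SLF} {m n : F} (h1 : fixv g m n) : fixv g⁻¹ m n := by
  obtain ⟨e1, e2⟩ := h1
  have := sl_det g
  constructor <;> simp only [sl_i00, sl_i01, sl_i10, sl_i11]
  · linear_combination -g.1 1 1 * e1 + g.1 0 1 * e2 + m * this
  · linear_combination g.1 1 0 * e1 - g.1 0 0 * e2 + n * this

lemma fixv_mul {g k : SLF} {m n : F} (h1 : fixv g m n) (h2 : fixv k m n) : fixv (g * k) m n := by
  obtain ⟨e1, e2⟩ := h1
  obtain ⟨f1, f2⟩ := h2
  constructor <;> simp only [sl_m00, sl_m01, sl_m10, sl_m11]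
  · linear_combination e1 + g.1 0 0 * f1 + g.1 0 1 * f2
  · linear_combination e2 + g.1 1 0 * f1 + g.1 1 1 * f2

lemma fixv_one {m n : F} : fixv (1 : SLF) m n := by
  constructor <;> simp [sl_o00, sl_o01, sl_o10, sl_o11]

/-- conjugates fix the moved vector -/
lemma fixv_conj {g a : SLF} {m n : F} (h1 : fixv g m n) :
    fixv (a * g * a⁻¹) (a.1 0 0 * m + a.1 0 1 * n) (a.1 1 0 * m + a.1 1 1 * n) := by
  obtain ⟨e1, e2⟩ := h1
  have ad := sl_det a
  constructor <;> simp only [sl_m00, sl_m01, sl_m10, sl_m11, sl_i00, sl_i01, sl_i10, sl_i11]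
  · linear_combination (a.1 0 0 * e1 + a.1 0 1 * e2) + ad * ((a.1 0 0 * g.1 0 0 + a.1 0 1 * g.1 1 0) * m + (a.1 0 0 * g.1 0 1 + a.1 0 1 * g.1 1 1) * n)
  · linear_combination (a.1 1 0 * e1 + a.1 1 1 * e2) + ad * ((a.1 1 0 * g.1 0 0 + a.1 1 1 * g.1 1 0) * m + (a.1 1 0 * g.1 0 1 + a.1 1 1 * g.1 1 1) * n)

lemma fixv_par {g : SLF} {m n a b : F} (h0 : m ≠ 0 ∨ n ≠ 0) (h : a * n = b * m) (h1 : fixv g m n) : fixv g a b := by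
  obtain ⟨l, rfl, rfl⟩ := par_exists h0 h
  obtain ⟨e1, e2⟩ := h1
  constructor
  · linear_combination l * e1
  · linear_combination l * e2

/-- shape of nilpotents: vector in the kernel, also testing vector -/
lemma nilp {α β γ : F} (h : α ^ 2 + β * γ = 0) (h0 : ¬ (α = 0 ∧ β = 0 ∧ γ = 0)) :
    ∃ m n : F, (m ≠ 0 ∨ n ≠ 0) ∧ α * m + β * n = 0 ∧ γ * m - α * n = 0 ∧
    ∀ x : SLF, x.1 0 0 * α + x.1 0 1 * γ + x.1 1 0 * β - x.1 1 1 * α = 0 → qf x m n = 0 := by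
  by_cases hb : β = 0
  · have ha : α = 0 := by
      rw [hb] at h; simpa using h
    have hc : γ ≠ 0 := fun hc => h0 ⟨ha, hb, hc⟩
    refine ⟨0, 1, Or.inr one_ne_zero, by simp [hb], by simp [ha], ?_⟩
    intro x hx
    simp only [ha, hb] at hx
    have : x.1 0 1 = 0 := by
      apply mul_right_cancel₀ hc; linear_combination hx
    simp [qf, this]
  · refine ⟨β, -α, Or.inl hb, by ring, by linear_combination h, ?_⟩
    intro x hx
    simp only [qf]
    linear_combination (-β) * hx + x.1 0 1 * h

lemma eig_lemma {x y : SLF} (ht : trc x = trc y) (h2 : trc (x * y) = 2) (hne : x * y ≠ 1) :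
    ∃ m n : F, (m ≠ 0 ∨ n ≠ 0) ∧ qf x m n = 0 ∧ fixv (x * y) m n := by
  have xd := sl_det x
  have yd := sl_det y
  simp only [trc, sl_m00, sl_m11] at ht h2
  obtain ⟨m, n, h0, k1, k2, k3⟩ := nilp (α := y.1 0 0 - x.1 1 1) (β := y.1 0 1 + x.1 0 1)
    (γ := y.1 1 0 + x.1 1 0)
    (by linear_combination (-y.1 0 0 + x.1 1 1) * ht - yd - xd + h2) (by
      rintro ⟨a, b, c⟩
      apply hne
      have hy : y = x⁻¹ := by
        apply sl_ext <;> simp only [sl_i00, sl_i01, sl_i10, sl_i11]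
        · linear_combination a
        · linear_combination b
        · linear_combination c
        · linear_combination -ht - a
      rw [hy, mul_inv_cancel])
  refine ⟨m, n, h0, k3 x ?_, ?_⟩
  · linear_combination h2 - 2 * xd + x.1 1 1 * ht
  · constructor <;> simp only [sl_m00, sl_m01, sl_m10, sl_m11]
    · linear_combination x.1 0 0 * k1 + x.1 0 1 * k2 - x.1 0 1 * n * ht + m * xd
    · linear_combination x.1 1 0 * k1 + x.1 1 1 * k2 - x.1 1 1 * n * ht + n * xd

lemma eig_lines {x : SLF} (hx : trc x ^ 2 ≠ 4) : ∃ a b c d : F, (a ≠ 0 ∨ b ≠ 0) ∧ (c ≠ 0 ∨ d ≠ 0) ∧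
    ∀ m n : F, (m ≠ 0 ∨ n ≠ 0) → qf x m n = 0 → a * n = b * m ∨ c * n = d * m := by
  by_cases h1 : ∃ a b : F, (a ≠ 0 ∨ b ≠ 0) ∧ qf x a b = 0
  · obtain ⟨a, b, hab, q1⟩ := h1
    by_cases h2 : ∃ c d : F, (c ≠ 0 ∨ d ≠ 0) ∧ qf x c d = 0 ∧ a * d ≠ b * c
    · obtain ⟨c, d, hcd, q2, hn⟩ := h2
      refine ⟨a, b, c, d, hab, hcd, ?_⟩
      intro m n hmn q3
      by_contra hcon
      rw [not_or] at hcon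
      obtain ⟨n1, n2⟩ := hcon
      have hP : (a * d - b * c) * (a * n - b * m) * (c * n - d * m) ≠ 0 :=
        mul_ne_zero (mul_ne_zero (sub_ne_zero.2 hn) (sub_ne_zero.2 n1)) (sub_ne_zero.2 n2)
      apply hx
      simp only [qf] at q1 q2 q3
      apply scalar_of_entries
      · apply mul_left_cancel₀ hP
        linear_combination q1 * (c * d * m ^ 2 - m * n * c ^ 2) * (-1) + q2 * (a * b * m ^ 2 - m * n * a ^ 2) - q3 * (a * b * c ^ 2 - c * d * a ^ 2)
      · apply mul_left_cancel₀ hP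
        linear_combination (q1 * (d ^ 2 * m * n - n ^ 2 * c * d) * (-1) + q2 * (b ^ 2 * m * n - n ^ 2 * a * b) - q3 * (b ^ 2 * c * d - d ^ 2 * a * b)) * (-1)
      · apply mul_left_cancel₀ hP
        linear_combination (q1 * (d ^ 2 * m ^ 2 - n ^ 2 * c ^ 2) * (1) - q2 * (b ^ 2 * m ^ 2 - n ^ 2 * a ^ 2) + q3 * (b ^ 2 * c ^ 2 - d ^ 2 * a ^ 2))
    · refine ⟨a, b, a, b, hab, hab, ?_⟩
      intro m n hmn q
      left
      by_contra hcon
      exact h2 ⟨m, n, hmn, q, hcon⟩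
  · refine ⟨1, 0, 1, 0, by simp, by simp, ?_⟩
    intro m n hmn q
    exact absurd ⟨m, n, hmn, q⟩ h1

lemma cross_par {p1 p2 p3 q1 q2 q3 w1 w2 w3 : F}
    (hr : ¬ (p2 * q3 - p3 * q2 = 0 ∧ p3 * q1 - p1 * q3 = 0 ∧ p1 * q2 - p2 * q1 = 0))
    (hp : w1 * p1 + w2 * p2 + w3 * p3 = 0) (hq : w1 * q1 + w2 * q2 + w3 * q3 = 0) :
    ∃ l, w1 = l * (p2 * q3 - p3 * q2) ∧ w2 = l * (p3 * q1 - p1 * q3) ∧ w3 = l * (p1 * q2 - p2 * q1) := by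
  have c3 : w1 * (p3 * q1 - p1 * q3) = w2 * (p2 * q3 - p3 * q2) := by
    linear_combination p3 * hq - q3 * hp
  have c1 : w2 * (p1 * q2 - p2 * q1) = w3 * (p3 * q1 - p1 * q3) := by
    linear_combination p1 * hq - q1 * hp
  have c2 : w3 * (p2 * q3 - p3 * q2) = w1 * (p1 * q2 - p2 * q1) := by
    linear_combination p2 * hq - q2 * hp
  generalize p2 * q3 - p3 * q2 = r1 at *
  generalize p3 * q1 - p1 * q3 = r2 at *
  generalize p1 * q2 - p2 * q1 = r3 at *
  by_cases h1 : r1 = 0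
  · by_cases h2 : r2 = 0
    · have h3 : r3 ≠ 0 := fun h3 => hr ⟨h1, h2, h3⟩
      refine ⟨w3 / r3, ?_, ?_, by field_simp⟩
      · field_simp; linear_combination -c2
      · field_simp; linear_combination c1
    · refine ⟨w2 / r2, ?_, by field_simp, ?_⟩
      · field_simp; linear_combination c3
      · field_simp; linear_combination -c1
  · refine ⟨w1 / r1, by field_simp, ?_, ?_⟩
    · field_simp; linear_combination -c3
    · field_simp; linear_combination c2

/-- shared eigenvector and equal trace -/
lemma shared_eig {x y : SLF} {m n : F} (h0 : m ≠ 0 ∨ n ≠ 0) (hx : qf x m n = 0) (hy : qf y m n = 0)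
    (ht : trc x = trc y) : trc (x * y) = 2 ∨ trc (x * y⁻¹) = 2 := by
  obtain ⟨l, e1, e2⟩ := qf_eig h0 hx
  obtain ⟨k, f1, f2⟩ := qf_eig h0 hy
  have xd := sl_det x
  have yd := sl_det y
  have charp : ∀ (z : SLF) (j : F), z.1 0 0 * m + z.1 0 1 * n = j * m → z.1 1 0 * m + z.1 1 1 * n = j * n →
      j ^ 2 - trc z * j + 1 = 0 := by
    intro z j g1 g2
    have zd := sl_det z
    simp only [trc]
    rcases h0 with h0 | h0 <;> apply mul_left_cancel₀ h0
    · linear_combination (-j + z.1 1 1) * g1 - z.1 0 1 * g2 - m * zd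
    · linear_combination (-j + z.1 0 0) * g2 - z.1 1 0 * g1 - n * zd
  have cx := charp x l e1 e2
  have cy := charp y k f1 f2
  rw [← ht] at cy
  have hl : l ≠ 0 := by rintro rfl; simp at cx
  have c : (k - l) * (k * l - 1) = 0 := by
    have : l * (k ^ 2 + 1) = k * (l ^ 2 + 1) := by linear_combination l * cy - k * cx
    linear_combination this
  rcases mul_eq_zero.1 c with c | c
  · right
    have ckl : k = l := by linear_combination c
    rw [ckl] at f1 f2
    have g1 : fixv (x * y⁻¹) m n := by
      constructor <;> simp only [sl_m00, sl_m01, sl_m10, sl_m11, sl_i00, sl_i01, sl_i10, sl_i11] <;>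
        apply mul_left_cancel₀ hl
      · linear_combination (-(x.1 0 0 * y.1 1 1 - x.1 0 1 * y.1 1 0)) * f1 - (-x.1 0 0 * y.1 0 1 + x.1 0 1 * y.1 0 0) * f2 + e1 + (x.1 0 0 * m + x.1 0 1 * n) * yd
      · linear_combination (-(x.1 1 0 * y.1 1 1 - x.1 1 1 * y.1 1 0)) * f1 - (-x.1 1 0 * y.1 0 1 + x.1 1 1 * y.1 0 0) * f2 + e2 + (x.1 1 0 * m + x.1 1 1 * n) * yd
    have := charp _ 1 (by rw [one_mul]; exact g1.1) (by rw [one_mul]; exact g1.2)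
    linear_combination -this
  · left
    have g1 : fixv (x * y) m n := by
      constructor <;> simp only [sl_m00, sl_m01, sl_m10, sl_m11, sl_i00, sl_i01, sl_i10, sl_i11]
      · linear_combination x.1 0 0 * f1 + x.1 0 1 * f2 + k * e1 + m * c
      · linear_combination x.1 1 0 * f1 + x.1 1 1 * f2 + k * e2 + n * c
    have := charp _ 1 (by rw [one_mul]; exact g1.1) (by rw [one_mul]; exact g1.2)
    linear_combination -this

/-- noncommutation of u = xy, v = xz for good triples -/
lemma good_noncomm {x y z : SLF} (hy : trc y = trc x) (hz : trc z = trc x) (h0 : trc x ≠ 0) (h2 : (2 : F) ≠ 0)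
    (s2 : trc (x * y) ≠ 2) (z1 : z ≠ x⁻¹) (z2 : z ≠ y) : (x * y) * (x * z) ≠ (x * z) * (x * y) := by
  intro hc
  rw [comm_entries] at hc
  obtain ⟨c1, c2, c3⟩ := hc
  have xd := sl_det x
  have yd := sl_det y
  have zd := sl_det z
  have ud := sl_det (x * y)
  -- u nonscalar
  have hns : ¬ ((x * y).1 0 1 = 0 ∧ (x * y).1 1 0 = 0 ∧ (x * y).1 0 0 = (x * y).1 1 1) := by
    rintro ⟨k1, k2, k3⟩
    rw [k1, k2, k3] at ud
    have : ((x * y).1 1 1 - 1) * ((x * y).1 1 1 + 1) = 0 := by linear_combination ud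
    rcases mul_eq_zero.1 this with e | e
    · apply s2; simp only [trc]; linear_combination k3 + 2 * e
    · -- y = - x⁻¹
      apply h0
      have hyx : y = x⁻¹ * (x * y) := by group
      have : trc y = - trc x := by
        conv_lhs => rw [hyx]
        rw [trc, sl_m00 x⁻¹, sl_m11 x⁻¹, k1, k2, k3]
        simp only [sl_i00, sl_i01, sl_i10, sl_i11, trc]
        linear_combination (x.1 0 0 + x.1 1 1) * e
      apply mul_left_cancel₀ h2
      linear_combination -hy + this
  obtain ⟨b, hb1, hb2, hb3⟩ : ∃ b, (x * z).1 0 1 = b * (x * y).1 0 1 ∧ (x * z).1 1 0 = b * (x * y).1 1 0 ∧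
      (x * z).1 0 0 - (x * z).1 1 1 = b * ((x * y).1 0 0 - (x * y).1 1 1) := by
    generalize (x * z).1 0 1 = v01 at *
    generalize (x * z).1 1 0 = v10 at *
    generalize (x * z).1 0 0 - (x * z).1 1 1 = vd at *
    generalize (x * y).1 0 1 = u01 at *
    generalize (x * y).1 1 0 = u10 at *
    have hns' : ¬ (u01 = 0 ∧ u10 = 0 ∧ (x * y).1 0 0 - (x * y).1 1 1 = 0) := by
      rintro ⟨a, b, c⟩; exact hns ⟨a, b, by linear_combination c⟩
    generalize (x * y).1 0 0 - (x * y).1 1 1 = ud at *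
    by_cases e1 : u01 = 0
    · by_cases e2 : u10 = 0
      · have e3 : ud ≠ 0 := fun e3 => hns' ⟨e1, e2, e3⟩
        refine ⟨vd / ud, ?_, ?_, by field_simp⟩
        · field_simp; linear_combination c2
        · field_simp; linear_combination c3
      · refine ⟨v10 / u10, ?_, by field_simp, ?_⟩
        · field_simp; linear_combination -c1
        · field_simp; linear_combination -c3
    · refine ⟨v01 / u01, by field_simp, ?_, ?_⟩
      · field_simp; linear_combination c1
      · field_simp; linear_combination -c2
  obtain ⟨a, ha⟩ : ∃ a, (x * z).1 0 0 = a + b * (x * y).1 0 0 := ⟨_, (sub_add_cancel _ _).symm⟩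
  have ha' : (x * z).1 1 1 = a + b * (x * y).1 1 1 := by linear_combination ha - hb3
  have hzx : z = x⁻¹ * (x * z) := by group
  have z00 : z.1 0 0 = a * x.1 1 1 + b * y.1 0 0 := by
    conv_lhs => rw [hzx]
    rw [sl_m00 x⁻¹, ha, hb2, sl_i00, sl_i01, sl_m00, sl_m10]
    linear_combination b * y.1 0 0 * xd
  have z01 : z.1 0 1 = - a * x.1 0 1 + b * y.1 0 1 := by
    conv_lhs => rw [hzx]
    rw [sl_m01 x⁻¹, ha', hb1, sl_i00, sl_i01, sl_m01, sl_m11]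
    linear_combination b * y.1 0 1 * xd
  have z10 : z.1 1 0 = - a * x.1 1 0 + b * y.1 1 0 := by
    conv_lhs => rw [hzx]
    rw [sl_m10 x⁻¹, ha, hb2, sl_i10, sl_i11, sl_m00, sl_m10]
    linear_combination b * y.1 1 0 * xd
  have z11 : z.1 1 1 = a * x.1 0 0 + b * y.1 1 1 := by
    conv_lhs => rw [hzx]
    rw [sl_m11 x⁻¹, ha', hb1, sl_i10, sl_i11, sl_m01, sl_m11]
    linear_combination b * y.1 1 1 * xd
  have hab : a = 1 - b := by
    apply mul_right_cancel₀ h0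
    simp only [trc] at hy hz ⊢
    linear_combination hz - z00 - z11 - b * hy
  rw [z00, z01, z10, z11] at zd
  have s2' : x.1 0 0 * y.1 0 0 + x.1 0 1 * y.1 1 0 + (x.1 1 0 * y.1 0 1 + x.1 1 1 * y.1 1 1) - 2 ≠ 0 := by
    intro h; apply s2; simp only [trc, sl_m00, sl_m11]; linear_combination h
  have hb : b * (1 - b) = 0 := by
    apply mul_right_cancel₀ s2'
    rw [hab] at zd
    linear_combination zd - (1 - b) ^ 2 * xd - b ^ 2 * yd
  rcases mul_eq_zero.1 hb with hb | hb
  · apply z1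
    rw [hab, hb] at z00 z01 z10 z11
    apply sl_ext <;> simp only [sl_i00, sl_i01, sl_i10, sl_i11]
    · rw [z00]; ring
    · rw [z01]; ring
    · rw [z10]; ring
    · rw [z11]; ring
  · apply z2
    have hb : b = 1 := by linear_combination -hb
    rw [hab, hb] at z00 z01 z10 z11
    apply sl_ext
    · rw [z00]; ring
    · rw [z01]; ring
    · rw [z10]; ring
    · rw [z11]; ring

lemma fibre_bound {x x' x'' u v : SLF} {t : F} (h0 : t ≠ 0) (h2 : (2 : F) ≠ 0)
    (hx : trc x = t) (hx' : trc x' = t) (hx'' : trc x'' = t)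
    (hu : trc (x⁻¹ * u) = t) (hu' : trc (x'⁻¹ * u) = t) (hu'' : trc (x''⁻¹ * u) = t)
    (hv : trc (x⁻¹ * v) = t) (hv' : trc (x'⁻¹ * v) = t) (hv'' : trc (x''⁻¹ * v) = t)
    (g1 : trc u ≠ 2) (g2 : trc (x * (x⁻¹ * u)⁻¹) ≠ 2) (g3 : x⁻¹ * v ≠ x⁻¹) (g4 : x⁻¹ * v ≠ x⁻¹ * u)
    (n1 : x' ≠ x) (n2 : x'' ≠ x) : x'' = x' := by
  have hc : u * v ≠ v * u := by
    have := good_noncomm (x := x) (y := x⁻¹ * u) (z := x⁻¹ * v) (by rw [hu, hx]) (by rw [hv, hx])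
      (by rw [hx]; exact h0) h2 (by simpa using g1) g3 g4
    simpa using this
  have hc' : ¬ (u.1 1 0 * v.1 0 1 - u.1 0 1 * v.1 1 0 = 0 ∧
    u.1 0 1 * (v.1 0 0 - v.1 1 1) - (u.1 0 0 - u.1 1 1) * v.1 0 1 = 0 ∧
    (u.1 0 0 - u.1 1 1) * v.1 1 0 - u.1 1 0 * (v.1 0 0 - v.1 1 1) = 0) := by
    rintro ⟨a, b, c⟩
    apply hc
    rw [comm_entries]
    exact ⟨by linear_combination -a, by linear_combination -b, by linear_combination c⟩
  have xd := sl_det x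
  have xd' := sl_det x'
  have xd'' := sl_det x''
  have step : ∀ (k : SLF), trc k = t → trc (k⁻¹ * u) = t → trc (k⁻¹ * v) = t →
    ∃ l, k.1 0 0 - x.1 0 0 = l * (u.1 1 0 * v.1 0 1 - u.1 0 1 * v.1 1 0) ∧
      k.1 0 1 - x.1 0 1 = l * (u.1 0 1 * (v.1 0 0 - v.1 1 1) - (u.1 0 0 - u.1 1 1) * v.1 0 1) ∧
      k.1 1 0 - x.1 1 0 = l * ((u.1 0 0 - u.1 1 1) * v.1 1 0 - u.1 1 0 * (v.1 0 0 - v.1 1 1)) := by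
    intro k k1 k2 k3
    simp only [trc, sl_m00, sl_m11, sl_i00, sl_i01, sl_i10, sl_i11] at hx hu hv k1 k2 k3
    apply cross_par hc'
    · linear_combination hu - k2 + u.1 0 0 * k1 - u.1 0 0 * hx
    · linear_combination hv - k3 + v.1 0 0 * k1 - v.1 0 0 * hx
  obtain ⟨l, a1, a2, a3⟩ := step x' hx' hu' hv'
  obtain ⟨l', b1, b2, b3⟩ := step x'' hx'' hu'' hv''
  have huc : u.1 0 0 * (u.1 1 0 * v.1 0 1 - u.1 0 1 * v.1 1 0) + u.1 0 1 * ((u.1 0 0 - u.1 1 1) * v.1 1 0 - u.1 1 0 * (v.1 0 0 - v.1 1 1)) + u.1 1 0 * (u.1 0 1 * (v.1 0 0 - v.1 1 1) - (u.1 0 0 - u.1 1 1) * v.1 0 1) - u.1 1 1 * (u.1 1 0 * v.1 0 1 - u.1 0 1 * v.1 1 0) = 0 := by ring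
  generalize u.1 1 0 * v.1 0 1 - u.1 0 1 * v.1 1 0 = α at *
  generalize u.1 0 1 * (v.1 0 0 - v.1 1 1) - (u.1 0 0 - u.1 1 1) * v.1 0 1 = β at *
  generalize (u.1 0 0 - u.1 1 1) * v.1 1 0 - u.1 1 0 * (v.1 0 0 - v.1 1 1) = γ at *
  by_contra hne
  have ent : ∀ (k : SLF) (j : F), trc k = t → k.1 0 0 - x.1 0 0 = j * α → k.1 0 1 - x.1 0 1 = j * β →
    k.1 1 0 - x.1 1 0 = j * γ → k ≠ x → j ≠ 0 ∧ j * (α ^ 2 + β * γ) = - (x.1 0 0 * α + x.1 0 1 * γ + x.1 1 0 * β - x.1 1 1 * α) := by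
    intro k j k0 k1 k2 k3 hk
    have k4 : k.1 1 1 - x.1 1 1 = - j * α := by
      simp only [trc] at k0 hx; linear_combination k0 - hx - k1
    have hj : j ≠ 0 := by
      rintro rfl
      apply hk; apply sl_ext
      · linear_combination k1
      · linear_combination k2
      · linear_combination k3
      · linear_combination k4
    refine ⟨hj, ?_⟩
    apply mul_left_cancel₀ hj
    have kd := sl_det k
    have e1 : k.1 0 0 = x.1 0 0 + j * α := by linear_combination k1
    have e2 : k.1 0 1 = x.1 0 1 + j * β := by linear_combination k2
    have e3 : k.1 1 0 = x.1 1 0 + j * γ := by linear_combination k3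
    have e4 : k.1 1 1 = x.1 1 1 - j * α := by linear_combination k4
    rw [e1, e2, e3, e4] at kd
    linear_combination -kd + xd
  obtain ⟨l0, c1⟩ := ent x' l hx' a1 a2 a3 n1
  obtain ⟨l0', c2⟩ := ent x'' l' hx'' b1 b2 b3 n2
  have hll : l - l' ≠ 0 := by
    intro h
    have h : l = l' := by linear_combination h
    apply hne
    subst h
    apply sl_ext
    · linear_combination b1 - a1
    · linear_combination b2 - a2
    · linear_combination b3 - a3
    · simp only [trc] at hx' hx''; linear_combination hx'' - hx' - (b1 - a1)
  have hnil : α ^ 2 + β * γ = 0 := by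
    apply mul_left_cancel₀ hll; linear_combination c1 - c2
  have hxc : x.1 0 0 * α + x.1 0 1 * γ + x.1 1 0 * β - x.1 1 1 * α = 0 := by
    rw [hnil] at c1; linear_combination c1
  obtain ⟨m, n, hmn, -, -, hq⟩ := nilp hnil hc'
  have q1 := hq x hxc
  have q2 := hq u huc
  have q3 : qf x⁻¹ m n = 0 := by rw [qf_inv, q1, neg_zero]
  have q4 := qf_mul hmn q3 q2
  rcases shared_eig hmn q1 q4 (by rw [hx, hu]) with h | h
  · apply g1; simpa using h
  · exact g2 h
end alg2

open Finset Pointwise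

section pw
variable {G : Type*} [Group G] [DecidableEq G]

/-- opaque-ish power of a finset -/
def pw (A : Finset G) (n : ℕ) : Finset G := A ^ n

lemma pw_one (A : Finset G) : pw A 1 = A := pow_one A

lemma pw_mem {A : Finset G} {x y : G} {m n k : ℕ} (hk : m + n = k) (hx : x ∈ pw A m) (hy : y ∈ pw A n) :
    x * y ∈ pw A k := by
  unfold pw at *
  rw [← hk, pow_add]; exact mul_mem_mul hx hy

lemma pw_inv {A : Finset G} (hinv : A⁻¹ = A) {x : G} {m : ℕ} (hx : x ∈ pw A m) : x⁻¹ ∈ pw A m := by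
  unfold pw at *
  rw [← hinv, inv_pow]
  exact Finset.inv_mem_inv hx

lemma pw_sub {A : Finset G} (h1 : 1 ∈ A) {m n : ℕ} (h : m ≤ n) : pw A m ⊆ pw A n :=
  Finset.pow_subset_pow_right h1 h

attribute [irreducible] pw
end pw

section prod
variable {F : Type*} [Field F]

local notation "SLF" => Matrix.SpecialLinearGroup (Fin 2) F

lemma exists_up : ∃ g : SLF, g.1 0 0 = 1 ∧ g.1 0 1 = 1 ∧ g.1 1 0 = 0 ∧ g.1 1 1 = 1 :=
  ⟨⟨!![1, 1; 0, 1], by simp [Matrix.det_fin_two]⟩, by simp, by simp, by simp, by simp⟩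
lemma exists_lo : ∃ g : SLF, g.1 0 0 = 1 ∧ g.1 0 1 = 0 ∧ g.1 1 0 = 1 ∧ g.1 1 1 = 1 :=
  ⟨⟨!![1, 0; 1, 1], by simp [Matrix.det_fin_two]⟩, by simp, by simp, by simp, by simp⟩

variable [DecidableEq F]

instance fixvDec (g : SLF) (m n : F) : Decidable (fixv g m n) := by unfold fixv; infer_instance


lemma esc {A : Finset SLF} (hgen : Subgroup.closure (A : Set SLF) = ⊤) {m n : F} (h0 : m ≠ 0 ∨ n ≠ 0) :
    ∃ a ∈ A, qf a m n ≠ 0 := by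
  by_contra hcon
  push Not at hcon
  have key : ∀ g : SLF, qf g m n = 0 := by
    intro g
    have hg : g ∈ Subgroup.closure (A : Set SLF) := by rw [hgen]; trivial
    induction hg using Subgroup.closure_induction with
    | mem x hx => exact hcon x (by simpa using hx)
    | one => simp [qf, sl_o00, sl_o01, sl_o10, sl_o11]
    | mul x y _ _ hx hy => exact qf_mul h0 hx hy
    | inv x _ hx => rw [qf_inv, hx, neg_zero]
  obtain ⟨g, a, b, c, d⟩ := exists_up (F := F)
  obtain ⟨g', a', b', c', d'⟩ := exists_lo (F := F)
  have k1 := key g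
  have k2 := key g'
  simp only [qf, a, b, c, d, a', b', c', d'] at k1 k2
  rcases h0 with h | h
  · apply h; simpa using k2
  · apply h; simpa using k1

lemma V_bound {A : Finset SLF} (hinv : A⁻¹ = A)
    (hgen : Subgroup.closure (A : Set SLF) = ⊤) {m n : F} (h0 : m ≠ 0 ∨ n ≠ 0) :
    (#{g ∈ pw A 16 | fixv g m n}) ^ 2 ≤ #(pw A 34) := by
  obtain ⟨a, ha, hq⟩ := esc hgen h0
  rw [sq, ← card_product]
  apply card_le_card_of_injOn (fun q => q.1 * (a * q.2 * a⁻¹))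
  · intro q hq
    simp only [coe_product, Set.mem_prod, mem_coe, mem_filter] at hq
    have ha1 : a ∈ pw A 1 := by rw [pw_one]; exact ha
    have t1 : a * q.2 ∈ pw A 17 := pw_mem (m := 1) (n := 16) (k := 17) (by norm_num) ha1 hq.2.1
    have t2 : a * q.2 * a⁻¹ ∈ pw A 18 := pw_mem (m := 17) (n := 1) (k := 18) (by norm_num) t1 (pw_inv hinv ha1)
    have t3 : q.1 * (a * q.2 * a⁻¹) ∈ pw A 34 := pw_mem (m := 16) (n := 18) (k := 34) (by norm_num) hq.1.1 t2
    exact mem_coe.2 t3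
  · rintro ⟨g, h⟩ hq1 ⟨g', h'⟩ hq2 e
    simp only [coe_product, Set.mem_prod, mem_coe, mem_filter] at hq1 hq2 e
    have e1 : g'⁻¹ * g = a * (h' * h⁻¹) * a⁻¹ := by
      have : g'⁻¹ * (g * (a * h * a⁻¹)) * (a * h⁻¹ * a⁻¹) = g'⁻¹ * (g' * (a * h' * a⁻¹)) * (a * h⁻¹ * a⁻¹) := by rw [e]
      have l : g'⁻¹ * (g * (a * h * a⁻¹)) * (a * h⁻¹ * a⁻¹) = g'⁻¹ * g := by group
      have r : g'⁻¹ * (g' * (a * h' * a⁻¹)) * (a * h⁻¹ * a⁻¹) = a * (h' * h⁻¹) * a⁻¹ := by group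
      rw [← l, ← r, this]
    have f1 : fixv (g'⁻¹ * g) m n := fixv_mul (fixv_inv hq2.1.2) hq1.1.2
    have f2 := fixv_conj (a := a) (fixv_mul hq2.2.2 (fixv_inv hq1.2.2))
    rw [← e1] at f2
    have e2 := two_fix f1 f2 (by
      intro h; apply hq; simp only [qf]; linear_combination -h)
    have e3 : h' * h⁻¹ = 1 := by
      rw [e2] at e1
      have : h' * h⁻¹ = a⁻¹ * (a * (h' * h⁻¹) * a⁻¹) * a := by group
      rw [this, ← e1]; group
    simp only [Prod.mk.injEq]
    exact ⟨(inv_mul_eq_one.1 e2).symm, (mul_inv_eq_one.1 e3).symm⟩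

lemma T_bound {A : Finset SLF} (hinv : A⁻¹ = A)
    (hgen : Subgroup.closure (A : Set SLF) = ⊤) {S : ℝ} (hS0 : 0 ≤ S) (hS : (#(pw A 34) : ℝ) ≤ S ^ 2)
    {x : SLF} (hx : x ∈ pw A 8) (ht : trc x ^ 2 ≠ 4) :
    (#{y ∈ pw A 8 | trc y = trc x ∧ trc (x * y) = 2} : ℝ) ≤ 2 * S := by
  obtain ⟨a, b, c, d, hab, hcd, hl⟩ := eig_lines ht
  have hV : ∀ m n : F, (m ≠ 0 ∨ n ≠ 0) → (#{g ∈ pw A 16 | fixv g m n} : ℝ) ≤ S := by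
    intro m n h
    have := V_bound hinv hgen h
    have h3 : ((#{g ∈ pw A 16 | fixv g m n} : ℕ) : ℝ) ^ 2 ≤ S ^ 2 := by
      refine le_trans ?_ hS
      rw [← Nat.cast_pow]
      exact Nat.cast_le.2 this
    exact (pow_le_pow_iff_left₀ (Nat.cast_nonneg _) hS0 two_ne_zero).1 h3
  have hsub : #{y ∈ pw A 8 | trc y = trc x ∧ trc (x * y) = 2} ≤
      #({g ∈ pw A 16 | fixv g a b} ∪ {g ∈ pw A 16 | fixv g c d}) := by
    apply card_le_card_of_injOn (fun y => x * y)
    · intro y hy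
      simp only [mem_coe, mem_filter] at hy
      have hm : x * y ∈ pw A 16 := pw_mem (by norm_num) hx hy.1
      simp only [mem_coe, mem_union, mem_filter]
      by_cases hxy : x * y = 1
      · left; refine ⟨hm, ?_⟩; rw [hxy]; exact fixv_one
      · obtain ⟨m, n, hmn, hq, hf⟩ := eig_lemma hy.2.1.symm hy.2.2 hxy
        rcases hl m n hmn hq with h | h
        · left; exact ⟨hm, fixv_par hmn h hf⟩
        · right; exact ⟨hm, fixv_par hmn h hf⟩
    · intro y _ y' _ e
      exact mul_left_cancel e
  have h3 := (hsub.trans (card_union_le _ _))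
  have h4 : (#{y ∈ pw A 8 | trc y = trc x ∧ trc (x * y) = 2} : ℝ) ≤ (#{g ∈ pw A 16 | fixv g a b} : ℝ) + (#{g ∈ pw A 16 | fixv g c d} : ℝ) := by exact_mod_cast h3
  linarith [hV a b hab, hV c d hcd]

lemma class_bound {A : Finset SLF} (h2 : (2 : F) ≠ 0) (h1 : 1 ∈ A) (hinv : A⁻¹ = A)
    (hgen : Subgroup.closure (A : Set SLF) = ⊤) {S : ℝ} (hS0 : 1 ≤ S) (hS : (#(pw A 34) : ℝ) ≤ S ^ 2)
    {t : F} (ht0 : t ≠ 0) (ht : t ^ 2 ≠ 4) :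
    (#{y ∈ pw A 8 | trc y = t} : ℝ) ^ 3 ≤ 1728 * S ^ 4 := by
  obtain ⟨B, hB⟩ : ∃ B : Finset SLF, B = {y ∈ pw A 8 | trc y = t} := ⟨_, rfl⟩
  rw [← hB]
  have memB : ∀ y, y ∈ B ↔ y ∈ pw A 8 ∧ trc y = t := by intro y; rw [hB, mem_filter]
  let n := ⌊2 * S⌋₊
  have hn : (n : ℝ) ≤ 2 * S := Nat.floor_le (by linarith)
  have b1 : ∀ x ∈ B, #{y ∈ B | trc (x * y) = 2} ≤ n := by
    intro x hx
    apply Nat.le_floor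
    rw [memB] at hx
    refine le_trans ?_ (T_bound hinv hgen (by linarith) hS hx.1 (by rw [hx.2]; exact ht))
    norm_cast
    apply card_le_card
    intro y hy
    rw [mem_filter, memB] at hy
    rw [mem_filter, hx.2]
    exact ⟨hy.1.1, hy.1.2, hy.2⟩
  have b2 : ∀ x ∈ B, #{y ∈ B | trc (x * y⁻¹) = 2} ≤ n := by
    intro x hx
    refine le_trans ?_ (b1 x hx)
    apply card_le_card_of_injOn (fun y => y⁻¹)
    · intro y hy
      simp only [mem_coe, mem_filter, memB] at hy ⊢
      exact ⟨⟨pw_inv hinv hy.1.1, by rw [trc_inv, hy.1.2]⟩, hy.2⟩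
    · intro y _ y' _ e; exact inv_injective e
  let T := B ×ˢ (B ×ˢ B)
  have memT : ∀ q, q ∈ T ↔ q.1 ∈ B ∧ q.2.1 ∈ B ∧ q.2.2 ∈ B := by
    intro q; simp only [T, mem_product]
  have B1 : #{q ∈ T | trc (q.1 * q.2.1) = 2} ≤ n * #B ^ 2 := by
    rw [sq, ← card_product]
    apply card_le_mul_card_image_of_maps_to (f := fun q => (q.1, q.2.2))
    · intro q hq
      rw [mem_filter, memT] at hq
      exact mem_product.2 ⟨hq.1.1, hq.1.2.2⟩
    · rintro ⟨x, z⟩ hxz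
      rw [mem_product] at hxz
      refine le_trans ?_ (b1 x hxz.1)
      apply card_le_card_of_injOn (fun q => q.2.1)
      · rintro ⟨x', y, z'⟩ hq
        simp only [mem_coe, mem_filter, memT, Prod.mk.injEq] at hq ⊢
        obtain ⟨⟨hq1, hq2⟩, rfl, rfl⟩ := hq
        exact ⟨hq1.2.1, hq2⟩
      · rintro ⟨x', y, z'⟩ hq ⟨x'', y', z''⟩ hq' e
        simp only [mem_coe, mem_filter, memT, Prod.mk.injEq] at hq hq' e ⊢
        exact ⟨hq.2.1.trans hq'.2.1.symm, e, hq.2.2.trans hq'.2.2.symm⟩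
  have B2 : #{q ∈ T | trc (q.1 * q.2.1⁻¹) = 2} ≤ n * #B ^ 2 := by
    rw [sq, ← card_product]
    apply card_le_mul_card_image_of_maps_to (f := fun q => (q.1, q.2.2))
    · intro q hq
      rw [mem_filter, memT] at hq
      exact mem_product.2 ⟨hq.1.1, hq.1.2.2⟩
    · rintro ⟨x, z⟩ hxz
      rw [mem_product] at hxz
      refine le_trans ?_ (b2 x hxz.1)
      apply card_le_card_of_injOn (fun q => q.2.1)
      · rintro ⟨x', y, z'⟩ hq
        simp only [mem_coe, mem_filter, memT, Prod.mk.injEq] at hq ⊢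
        obtain ⟨⟨hq1, hq2⟩, rfl, rfl⟩ := hq
        exact ⟨hq1.2.1, hq2⟩
      · rintro ⟨x', y, z'⟩ hq ⟨x'', y', z''⟩ hq' e
        simp only [mem_coe, mem_filter, memT, Prod.mk.injEq] at hq hq' e ⊢
        exact ⟨hq.2.1.trans hq'.2.1.symm, e, hq.2.2.trans hq'.2.2.symm⟩
  have B3 : #{q ∈ T | q.2.2 = q.1⁻¹} ≤ #B ^ 2 := by
    rw [sq, ← card_product]
    apply card_le_card_of_injOn (fun q => (q.1, q.2.1))
    · intro q hq
      simp only [mem_coe, mem_filter, memT] at hq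
      exact mem_product.2 ⟨hq.1.1, hq.1.2.1⟩
    · rintro ⟨x', y, z'⟩ hq ⟨x'', y', z''⟩ hq' e
      simp only [mem_coe, mem_filter, Prod.mk.injEq] at hq hq' e ⊢
      refine ⟨e.1, e.2, ?_⟩
      rw [hq.2, hq'.2, e.1]
  have B4 : #{q ∈ T | q.2.2 = q.2.1} ≤ #B ^ 2 := by
    rw [sq, ← card_product]
    apply card_le_card_of_injOn (fun q => (q.1, q.2.1))
    · intro q hq
      simp only [mem_coe, mem_filter, memT] at hq
      exact mem_product.2 ⟨hq.1.1, hq.1.2.1⟩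
    · rintro ⟨x', y, z'⟩ hq ⟨x'', y', z''⟩ hq' e
      simp only [mem_coe, mem_filter, Prod.mk.injEq] at hq hq' e ⊢
      refine ⟨e.1, e.2, ?_⟩
      rw [hq.2, hq'.2, e.2]
  have B5 : #{q ∈ T | trc (q.1 * q.2.1) ≠ 2 ∧ trc (q.1 * q.2.1⁻¹) ≠ 2 ∧ q.2.2 ≠ q.1⁻¹ ∧ q.2.2 ≠ q.2.1} ≤
      2 * #(pw A 16) ^ 2 := by
    rw [sq (#(pw A 16)), ← card_product]
    apply card_le_mul_card_image_of_maps_to (f := fun q => (q.1 * q.2.1, q.1 * q.2.2))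
    · intro q hq
      rw [mem_filter, memT, memB, memB, memB] at hq
      exact mem_product.2 ⟨pw_mem (by norm_num) hq.1.1.1 hq.1.2.1.1, pw_mem (by norm_num) hq.1.1.1 hq.1.2.2.1⟩
    · rintro ⟨u, v⟩ -
      by_contra hcon
      rw [not_le, two_lt_card] at hcon
      obtain ⟨⟨x, y, z⟩, hq, ⟨x', y', z'⟩, hq', ⟨x'', y'', z''⟩, hq'', n1, n2, n3⟩ := hcon
      simp only [mem_filter, memT, memB, Prod.mk.injEq] at hq hq' hq''
      obtain ⟨⟨⟨hx, hy, hz⟩, g1, g2, g3, g4⟩, e1, e2⟩ := hq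
      obtain ⟨⟨⟨hx', hy', hz'⟩, -⟩, e1', e2'⟩ := hq'
      obtain ⟨⟨⟨hx'', hy'', hz''⟩, -⟩, e1'', e2''⟩ := hq''
      obtain rfl : y = x⁻¹ * u := by rw [← e1]; group
      obtain rfl : z = x⁻¹ * v := by rw [← e2]; group
      obtain rfl : y' = x'⁻¹ * u := by rw [← e1']; group
      obtain rfl : z' = x'⁻¹ * v := by rw [← e2']; group
      obtain rfl : y'' = x''⁻¹ * u := by rw [← e1'']; group
      obtain rfl : z'' = x''⁻¹ * v := by rw [← e2'']; group
      rw [mul_inv_cancel_left] at g1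
      have := fibre_bound ht0 h2 hx.2 hx'.2 hx''.2 hy.2 hy'.2 hy''.2 hz.2 hz'.2 hz''.2 g1 g2 g3 g4
        (by rintro rfl; exact n1 rfl) (by rintro rfl; exact n2 rfl)
      subst this
      exact n3 rfl
  have hT : #T ≤ 2 * #(pw A 16) ^ 2 + n * #B ^ 2 + n * #B ^ 2 + #B ^ 2 + #B ^ 2 := by
    have hsub : T ⊆ ((({q ∈ T | trc (q.1 * q.2.1) ≠ 2 ∧ trc (q.1 * q.2.1⁻¹) ≠ 2 ∧ q.2.2 ≠ q.1⁻¹ ∧ q.2.2 ≠ q.2.1} ∪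
      {q ∈ T | trc (q.1 * q.2.1) = 2}) ∪ {q ∈ T | trc (q.1 * q.2.1⁻¹) = 2}) ∪ {q ∈ T | q.2.2 = q.1⁻¹}) ∪ {q ∈ T | q.2.2 = q.2.1} := by
      intro q hq
      by_cases c4 : q.2.2 = q.2.1
      · exact mem_union_right _ (mem_filter.2 ⟨hq, c4⟩)
      apply mem_union_left
      by_cases c3 : q.2.2 = q.1⁻¹
      · exact mem_union_right _ (mem_filter.2 ⟨hq, c3⟩)
      apply mem_union_left
      by_cases c2 : trc (q.1 * q.2.1⁻¹) = 2
      · exact mem_union_right _ (mem_filter.2 ⟨hq, c2⟩)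
      apply mem_union_left
      by_cases c1 : trc (q.1 * q.2.1) = 2
      · exact mem_union_right _ (mem_filter.2 ⟨hq, c1⟩)
      apply mem_union_left
      exact mem_filter.2 ⟨hq, c1, c2, c3, c4⟩
    refine (card_le_card hsub).trans ?_
    refine (card_union_le _ _).trans (add_le_add ?_ B4)
    refine (card_union_le _ _).trans (add_le_add ?_ B3)
    refine (card_union_le _ _).trans (add_le_add ?_ B2)
    exact (card_union_le _ _).trans (add_le_add B5 B1)
  have hT' : #T = #B ^ 3 := by simp only [T, card_product]; ring
  rw [hT'] at hT
  have h16 : (#(pw A 16) : ℝ) ≤ S ^ 2 := le_trans (Nat.cast_le.2 (card_le_card (pw_sub h1 (by norm_num)))) hS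
  have hTr : (#B : ℝ) ^ 3 ≤ 2 * (#(pw A 16) : ℝ) ^ 2 + n * (#B : ℝ) ^ 2 + n * (#B : ℝ) ^ 2 + (#B : ℝ) ^ 2 + (#B : ℝ) ^ 2 := by exact_mod_cast hT
  have h16' : (#(pw A 16) : ℝ) ^ 2 ≤ S ^ 4 := by
    calc _ ≤ (S ^ 2) ^ 2 := pow_le_pow_left₀ (by positivity) h16 2
      _ = _ := by ring
  generalize (#B : ℝ) = b at *
  have hb : 0 ≤ b ^ 2 := sq_nonneg b
  have hnb : n * b ^ 2 ≤ 2 * S * b ^ 2 := mul_le_mul_of_nonneg_right hn hb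
  have h6 : b ^ 3 ≤ 2 * S ^ 4 + 6 * S * b ^ 2 := by nlinarith
  have hS4 : S ^ 3 ≤ S ^ 4 := pow_le_pow_right₀ hS0 (by norm_num)
  have hS1 : 0 ≤ S ^ 4 := by positivity
  by_cases hc : 12 * S ≤ b
  · have : 12 * S * b ^ 2 ≤ b * b ^ 2 := mul_le_mul_of_nonneg_right hc hb
    nlinarith
  · by_cases hb0 : 0 ≤ b
    · have : b ^ 3 ≤ (12 * S) ^ 3 := pow_le_pow_left₀ hb0 (not_le.1 hc).le 3
      nlinarith
    · have : b ^ 3 ≤ 0 := by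
        have : b ^ 3 = b ^ 2 * b := by ring
        rw [this]; exact mul_nonpos_of_nonneg_of_nonpos hb (not_le.1 hb0).le
      linarith
end prod

open Finset Pointwise

section prod2
variable {F : Type*} [Field F]

local notation "SLF" => Matrix.SpecialLinearGroup (Fin 2) F

lemma trc_mul_inv (g h : SLF) : trc (g * h⁻¹) = trc g * trc h - trc (g * h) := by
  simp only [trc, sl_m00, sl_m11, sl_i00, sl_i01, sl_i10, sl_i11]; ring

lemma unip_conj {g : SLF} {e : F} (he : e ^ 2 = 1) (ht : trc g = 2 * e)
    (hn : ¬ (g.1 0 1 = 0 ∧ g.1 1 0 = 0 ∧ g.1 0 0 = g.1 1 1)) :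
    ∃ m n : F, (m ≠ 0 ∨ n ≠ 0) ∧ ∀ a : SLF, qf a m n ≠ 0 → trc (g * (a * g * a⁻¹)) ≠ 2 := by
  have gd := sl_det g
  simp only [trc] at ht
  have h11 : g.1 1 1 = 2 * e - g.1 0 0 := by linear_combination ht
  rw [h11] at gd
  by_cases hb : g.1 0 1 = 0
  · rw [hb] at gd
    have ha : g.1 0 0 = e := by
      have : (g.1 0 0 - e) ^ 2 = 0 := by linear_combination -gd + he
      have := pow_eq_zero_iff two_ne_zero |>.1 this
      linear_combination this
    refine ⟨0, 1, Or.inr one_ne_zero, ?_⟩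
    intro a hq h2
    have ad := sl_det a
    have hg : g.1 1 0 ≠ 0 := by
      intro hg; apply hn; exact ⟨hb, hg, by rw [h11, ha]; ring⟩
    simp only [qf] at hq
    have hq' : a.1 0 1 ≠ 0 := by intro h; apply hq; rw [h]; ring
    apply mul_ne_zero (mul_ne_zero hg hg) (mul_ne_zero hq' hq')
    simp only [trc, sl_m00, sl_m01, sl_m10, sl_m11, sl_i00, sl_i01, sl_i10, sl_i11] at h2
    rw [h11, ha, hb] at h2
    linear_combination -h2 + 2 * he + 2 * e ^ 2 * ad
  · refine ⟨g.1 0 1, e - g.1 0 0, Or.inl hb, ?_⟩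
    intro a hq h2
    have ad := sl_det a
    apply mul_ne_zero hq hq
    simp only [trc, sl_m00, sl_m01, sl_m10, sl_m11, sl_i00, sl_i01, sl_i10, sl_i11] at h2
    simp only [qf]
    rw [h11] at h2
    generalize a.1 0 0 = a00 at *
    generalize a.1 0 1 = a01 at *
    generalize a.1 1 0 = a10 at *
    generalize a.1 1 1 = a11 at *
    generalize g.1 0 0 = x at *
    generalize g.1 0 1 = b at *
    generalize g.1 1 0 = c at *
    have hc : b * c = x * (2 * e - x) - 1 := by linear_combination -gd
    have hc2 : b ^ 2 * c = b * (x * (2 * e - x) - 1) := by rw [← hc]; ring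
    have hc3 : b ^ 3 * c = b ^ 2 * (x * (2 * e - x) - 1) := by rw [← hc]; ring
    have hc4 : b ^ 2 * c ^ 2 = (x * (2 * e - x) - 1) ^ 2 := by rw [← hc]; ring
    have key : b ^ 2 * (2 * (a00 * a11 - a01 * a10 - 1) * e ^ 2) = 0 := by rw [ad]; ring
    grind

variable [DecidableEq F]

lemma start {A : Finset SLF} (h2 : (2 : F) ≠ 0) (h3 : (3 : F) ≠ 0) (h1 : 1 ∈ A) (hinv : A⁻¹ = A)
    (hgen : Subgroup.closure (A : Set SLF) = ⊤) :
    ∃ w ∈ pw A 6, trc w ≠ 0 ∧ trc w ^ 2 ≠ 4 := by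
  by_contra hcon
  push Not at hcon
  have hA : ∀ a ∈ A, a ∈ pw A 1 := by intro a ha; rw [pw_one]; exact ha
  by_cases hg : ∃ g ∈ pw A 2, trc g ^ 2 = 4 ∧ ¬ (g.1 0 1 = 0 ∧ g.1 1 0 = 0 ∧ g.1 0 0 = g.1 1 1)
  · obtain ⟨g, hg, ht, hn⟩ := hg
    have he : (trc g / 2) ^ 2 = 1 := by
      rw [div_pow, ht, div_eq_one_iff_eq (pow_ne_zero 2 h2)]; norm_num
    obtain ⟨m, n, hmn, hq⟩ := unip_conj he (by field_simp) hn
    obtain ⟨a, ha, hqa⟩ := esc hgen hmn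
    have ne2 := hq a hqa
    have g4 : a * g * a⁻¹ ∈ pw A 4 := pw_mem (by norm_num) (pw_mem (m := 1) (n := 2) (k := 3) (by norm_num) (hA a ha) hg)
      (pw_inv hinv (hA a ha))
    have k1 := hcon (g * (a * g * a⁻¹)) (pw_mem (by norm_num) hg g4)
    have k2 := hcon (g * (a * g * a⁻¹)⁻¹) (pw_mem (by norm_num) hg (pw_inv hinv g4))
    rw [trc_mul_inv, trc_conj, ← sq, ht] at k2
    generalize trc (g * (a * g * a⁻¹)) = s at *
    have h4 : (4 : F) ≠ 0 := by
      have : (4 : F) = 2 * 2 := by norm_num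
      rw [this]; exact mul_ne_zero h2 h2
    have h12 : (12 : F) ≠ 0 := by
      have : (12 : F) = 4 * 3 := by norm_num
      rw [this]; exact mul_ne_zero h4 h3
    have h32 : (32 : F) ≠ 0 := by
      have : (32 : F) = 4 * 4 * 2 := by norm_num
      rw [this]; exact mul_ne_zero (mul_ne_zero h4 h4) h2
    by_cases hs : s = 0
    · subst hs
      have := k2 (by simpa using h4)
      apply h12; linear_combination this
    · have k1 := k1 hs
      have k1' : (s - 2) * (s + 2) = 0 := by linear_combination k1
      have k1'' : s = -2 := by
        rcases mul_eq_zero.1 k1' with h | h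
        · exact absurd (by linear_combination h) ne2
        · linear_combination h
      subst k1''
      have := k2 (by
        intro h
        have : (2 : F) * 3 = 0 := by linear_combination h
        exact (mul_ne_zero h2 h3) this)
      apply h32
      linear_combination this
  · push Not at hg
    obtain ⟨a, ha, hqa⟩ := esc hgen (m := 1) (n := 0) (Or.inl one_ne_zero)
    have h10 : a.1 1 0 ≠ 0 := by
      intro h; apply hqa; simp [qf, h]
    have A2 : ∀ c ∈ A, c ∈ pw A 2 := fun c hc => pw_sub h1 (by norm_num) (hA c hc)
    have dich : ∀ c ∈ pw A 2, trc c = 0 ∨ (c.1 0 1 = 0 ∧ c.1 1 0 = 0 ∧ c.1 0 0 = c.1 1 1) := by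
      intro c hc
      by_cases h0 : trc c = 0
      · exact Or.inl h0
      · right
        have := hcon c (pw_sub h1 (by norm_num) hc) h0
        exact hg c hc this
    have ta : trc a = 0 := by
      rcases dich a (A2 a ha) with h | h
      · exact h
      · exact absurd h.2.1 h10
    have ta' : a.1 1 1 = - a.1 0 0 := by simp only [trc] at ta; linear_combination ta
    have key : ∀ g : SLF, g * a * g⁻¹ = a ∨ g * a * g⁻¹ = a⁻¹ := by
      intro g
      have hg : g ∈ Subgroup.closure (A : Set SLF) := by rw [hgen]; trivial
      induction hg using Subgroup.closure_induction with
      | mem c hc =>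
        have hc : c ∈ A := by simpa using hc
        have scal : ∀ d k : SLF, (d.1 0 1 = 0 ∧ d.1 1 0 = 0 ∧ d.1 0 0 = d.1 1 1) → d * k = k * d := by
          rintro d k ⟨e1, e2, e3⟩
          rw [comm_entries, e1, e2, e3]; simp
        rcases dich c (A2 c hc) with h | h
        · have tc' : c.1 1 1 = - c.1 0 0 := by simp only [trc] at h; linear_combination h
          rcases dich (a * c) (pw_mem (by norm_num) (hA a ha) (hA c hc)) with k | k
          · right
            rw [mul_inv_eq_iff_eq_mul]
            simp only [trc, sl_m00, sl_m11, ta', tc'] at k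
            apply sl_ext <;> simp only [sl_m00, sl_m01, sl_m10, sl_m11, sl_i00, sl_i01, sl_i10, sl_i11, ta', tc']
            · linear_combination k
            · ring
            · ring
            · linear_combination k
          · left
            have := scal _ a k
            have e : a * (c * a) = a * (a * c) := by rw [← mul_assoc, this]
            rw [mul_left_cancel e]; group
        · left
          rw [scal c a h]; group
      | one => left; group
      | mul x y _ _ hx hy =>
        have e : x * y * a * (x * y)⁻¹ = x * (y * a * y⁻¹) * x⁻¹ := by group
        rw [e]
        rcases hy with hy | hy <;> rw [hy]
        · exact hx
        · have e2 : x * a⁻¹ * x⁻¹ = (x * a * x⁻¹)⁻¹ := by group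
          rw [e2]
          rcases hx with hx | hx <;> rw [hx]
          · right; rfl
          · left; group
      | inv x _ hx =>
        have e2 : x⁻¹ * a * x⁻¹⁻¹ = x⁻¹ * a * x := by group
        rw [e2]
        rcases hx with hx | hx
        · left
          conv_lhs => rw [← hx]
          group
        · right
          have : x⁻¹ * a * x = (x⁻¹ * a⁻¹ * x)⁻¹ := by group
          have e3 : x⁻¹ * a⁻¹ * x = a := by rw [← hx]; group
          rw [this, e3]
    obtain ⟨u, u00, u01, u10, u11⟩ := exists_up (F := F)
    rcases key u with h | h
    · rw [mul_inv_eq_iff_eq_mul] at h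
      have := congrArg (fun x : SLF => x.1 0 0) h
      simp only [sl_m00, u00, u01, u10, u11] at this
      apply h10; linear_combination this
    · rw [mul_inv_eq_iff_eq_mul] at h
      have := congrArg (fun x : SLF => x.1 1 0) h
      simp only [sl_m10, u00, u01, u10, u11, sl_i10, sl_i11] at this
      apply h10
      apply mul_left_cancel₀ h2
      linear_combination this

lemma trace_le_two {h : SLF} (h2 : (2 : F) ≠ 0) (hh : trc h ^ 2 ≠ 4) (t : F) (s : Finset SLF)
    (hs : ∀ w ∈ s, w * h = h * w ∧ trc w = t) : #s ≤ 2 := by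
  rcases s.eq_empty_or_nonempty with h0 | ⟨w, hw⟩
  · rw [h0]; simp
  · have : s ⊆ {w, w⁻¹} := by
      intro v hv
      have := torus_trace hh h2 (hs w hw).1.symm (hs v hv).1.symm (by rw [(hs w hw).2, (hs v hv).2])
      simpa using this
    exact (card_le_card this).trans card_le_two

lemma nonscal {h : SLF} (hh : trc h ^ 2 ≠ 4) : ¬ (h.1 0 1 = 0 ∧ h.1 1 0 = 0 ∧ h.1 0 0 = h.1 1 1) :=
  fun k => hh (scalar_of_entries k.1 k.2.1 k.2.2)

/-- the pivot property -/
def Piv (A : Finset SLF) (h : SLF) : Prop := ∃ w ∈ pw A 6, w * h = h * w ∧ trc w ≠ 0 ∧ trc w ^ 2 ≠ 4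

/-- the centralizer set -/
def Zs (A : Finset SLF) (h : SLF) (k : ℕ) : Finset SLF := {w ∈ pw A k | w * h = h * w}

lemma mem_Zs {A : Finset SLF} {h w : SLF} {k : ℕ} : w ∈ Zs A h k ↔ w ∈ pw A k ∧ w * h = h * w := by
  simp only [Zs, mem_filter]

lemma conj_inj_fib {w a b : SLF} (e : a * w * a⁻¹ = b * w * b⁻¹) : w * (b⁻¹ * a) = b⁻¹ * a * w := by
  have : b⁻¹ * (a * w * a⁻¹) * a = b⁻¹ * (b * w * b⁻¹) * a := by rw [e]
  have l : b⁻¹ * (a * w * a⁻¹) * a = b⁻¹ * a * w := by group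
  have r : b⁻¹ * (b * w * b⁻¹) * a = w * (b⁻¹ * a) := by group
  rw [← l, ← r, this]

lemma cent_lower {A : Finset SLF} (h2 : (2 : F) ≠ 0) (h1 : 1 ∈ A) (hinv : A⁻¹ = A)
    (hgen : Subgroup.closure (A : Set SLF) = ⊤) {R : ℝ} (hR1 : 1 ≤ R) (hR : (#(pw A 34) : ℝ) ≤ R * #A)
    {h : SLF} (hP : Piv A h) : (#A : ℝ) ≤ 1728 * R ^ 2 * (#(Zs A h 2) : ℝ) ^ 3 := by
  obtain ⟨w, hw, hc, ht0, ht⟩ := hP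
  have hA : ∀ a ∈ A, a ∈ pw A 1 := by intro a ha; rw [pw_one]; exact ha
  have hN1 : (1 : ℝ) ≤ #A := by exact_mod_cast card_pos.2 ⟨1, h1⟩
  have step : #A ≤ #(Zs A h 2) * #{y ∈ pw A 8 | trc y = trc w} := by
    apply card_le_mul_card_image_of_maps_to (f := fun a => a * w * a⁻¹)
    · intro a ha
      rw [mem_filter, trc_conj]
      exact ⟨pw_mem (by norm_num) (pw_mem (m := 1) (n := 6) (k := 7) (by norm_num) (hA a ha) hw) (pw_inv hinv (hA a ha)), rfl⟩
    · intro b _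
      rcases ({a ∈ A | a * w * a⁻¹ = b}).eq_empty_or_nonempty with h0 | ⟨a0, ha0⟩
      · rw [h0]; simp
      · rw [mem_filter] at ha0
        apply card_le_card_of_injOn (fun a => a0⁻¹ * a)
        · intro a ha
          simp only [mem_coe, mem_filter] at ha
          rw [mem_coe, mem_Zs]
          refine ⟨pw_mem (by norm_num) (pw_inv hinv (hA a0 ha0.1)) (hA a ha.1), ?_⟩
          have e := conj_inj_fib (ha.2.trans ha0.2.symm)
          exact comm_trans' (nonscal ht) e hc
        · intro a _ b _ e
          exact mul_left_cancel e
  have hS0 : (1 : ℝ) ≤ R * #A := by nlinarith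
  have hS := Real.sq_sqrt (show (0 : ℝ) ≤ R * #A by linarith)
  have cb := class_bound h2 h1 hinv hgen (S := √(R * #A)) (Real.one_le_sqrt.2 hS0) (by rw [hS]; exact hR) ht0 ht
  have s4 : √(R * #A) ^ 4 = (R * #A) ^ 2 := by
    rw [← hS]; rw [hS]; rw [show √(R * #A) ^ 4 = (√(R * #A) ^ 2) ^ 2 by ring, hS]
  rw [s4] at cb
  have step' : (#A : ℝ) ≤ #(Zs A h 2) * (#{y ∈ pw A 8 | trc y = trc w} : ℝ) := by exact_mod_cast step
  generalize (#{y ∈ pw A 8 | trc y = trc w} : ℝ) = b at *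
  have hz : (0 : ℝ) ≤ #(Zs A h 2) := Nat.cast_nonneg _
  generalize (#(Zs A h 2) : ℝ) = z at *
  generalize (#A : ℝ) = N at *
  have : N ^ 3 ≤ (z * b) ^ 3 := pow_le_pow_left₀ (by linarith) step' 3
  have h5 : N ^ 2 * N ≤ N ^ 2 * (1728 * R ^ 2 * z ^ 3) := by
    calc N ^ 2 * N = N ^ 3 := by ring
      _ ≤ z ^ 3 * b ^ 3 := by rw [← mul_pow]; exact this
      _ ≤ z ^ 3 * (1728 * (R * N) ^ 2) := mul_le_mul_of_nonneg_left cb (pow_nonneg hz 3)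
      _ = _ := by ring
  exact le_of_mul_le_mul_left h5 (by positivity)

lemma cent_big {A : Finset SLF} (h2 : (2 : F) ≠ 0) (h1 : 1 ∈ A) (hinv : A⁻¹ = A)
    (hgen : Subgroup.closure (A : Set SLF) = ⊤) {R : ℝ} (hR1 : 1 ≤ R) (hR : (#(pw A 34) : ℝ) ≤ R * #A)
    (hN : 373248 * R ^ 5 < #A)
    {h : SLF} (hP : Piv A h) : 6 * R < (#(Zs A h 2) : ℝ) := by
  have := cent_lower h2 h1 hinv hgen hR1 hR hP
  by_contra hcon
  have h3 : (#(Zs A h 2) : ℝ) ^ 3 ≤ (6 * R) ^ 3 := pow_le_pow_left₀ (Nat.cast_nonneg _) (not_lt.1 hcon) 3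
  have h4 : 1728 * R ^ 2 * (#(Zs A h 2) : ℝ) ^ 3 ≤ 1728 * R ^ 2 * (6 * R) ^ 3 :=
    mul_le_mul_of_nonneg_left h3 (by positivity)
  nlinarith

lemma pivot {A : Finset SLF} (h2 : (2 : F) ≠ 0) (h1 : 1 ∈ A) (hinv : A⁻¹ = A)
    (hgen : Subgroup.closure (A : Set SLF) = ⊤) {R : ℝ} (hR1 : 1 ≤ R) (hR : (#(pw A 34) : ℝ) ≤ R * #A)
    (hN : 373248 * R ^ 5 < #A)
    {h : SLF} (hh : trc h ^ 2 ≠ 4) (hP : Piv A h) {a : SLF} (ha : a ∈ A) : Piv A (a * h * a⁻¹) := by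
  have hA : ∀ a ∈ A, a ∈ pw A 1 := by intro a ha; rw [pw_one]; exact ha
  have hN0 : (0 : ℝ) < #A := by exact_mod_cast card_pos.2 ⟨1, h1⟩
  have big := cent_big h2 h1 hinv hgen hR1 hR hN hP
  have hh' : trc (a * h * a⁻¹) ^ 2 ≠ 4 := by rw [trc_conj]; exact hh
  have s1 : #(Zs A h 2) ≤ #(Zs A (a * h * a⁻¹) 4) := by
    apply card_le_card_of_injOn (fun w => a * w * a⁻¹)
    · intro w hw
      rw [mem_coe, mem_Zs] at hw
      rw [mem_coe, mem_Zs]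
      refine ⟨pw_mem (by norm_num) (pw_mem (m := 1) (n := 2) (k := 3) (by norm_num) (hA a ha) hw.1) (pw_inv hinv (hA a ha)), ?_⟩
      have l : a * w * a⁻¹ * (a * h * a⁻¹) = a * (w * h) * a⁻¹ := by group
      rw [l, hw.2]; group
    · intro x _ y _ e
      exact mul_left_cancel (mul_right_cancel e)
  generalize a * h * a⁻¹ = k at *
  have s2 : #(Zs A k 4) * #A ≤ #(Zs A k 2) * #(pw A 34) := by
    rw [← card_product]
    apply card_le_mul_card_image_of_maps_to (f := fun q => q.1 * q.2)
    · intro q hq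
      rw [mem_product, mem_Zs] at hq
      exact pw_sub h1 (by norm_num) (pw_mem (m := 4) (n := 1) (k := 5) (by norm_num) hq.1.1 (hA _ hq.2))
    · intro b _
      rcases ({q ∈ Zs A k 4 ×ˢ A | q.1 * q.2 = b}).eq_empty_or_nonempty with h0 | ⟨⟨z0, a0⟩, ha0⟩
      · rw [h0]; simp
      · simp only [mem_filter, mem_product, mem_Zs] at ha0
        apply card_le_card_of_injOn (fun q => z0⁻¹ * q.1)
        · rintro ⟨z, c⟩ hq
          simp only [mem_coe, mem_filter, mem_product, mem_Zs] at hq ⊢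
          constructor
          · have e : z0⁻¹ * z = a0 * c⁻¹ := by
              have : z0⁻¹ * (z * c) * c⁻¹ = z0⁻¹ * (z0 * a0) * c⁻¹ := by rw [hq.2, ha0.2]
              have l : z0⁻¹ * (z * c) * c⁻¹ = z0⁻¹ * z := by group
              have r : z0⁻¹ * (z0 * a0) * c⁻¹ = a0 * c⁻¹ := by group
              rw [← l, ← r, this]
            rw [e]
            exact pw_mem (by norm_num) (hA _ ha0.1.2) (pw_inv hinv (hA _ hq.1.2))
          · have c1 : Commute z0 k := ha0.1.1.2
            have c2 : Commute z k := hq.1.1.2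
            exact (c1.inv_left.mul_left c2)
        · rintro ⟨z, c⟩ hq ⟨z', c'⟩ hq' e
          simp only [mem_coe, mem_filter] at hq hq' e
          have e1 : z = z' := mul_left_cancel e
          subst e1
          have e2 : c = c' := mul_left_cancel (hq.2.trans hq'.2.symm)
          rw [e2]
  have s3 : (#(Zs A k 4) : ℝ) * #A ≤ #(Zs A k 2) * (R * #A) := by
    refine le_trans ?_ (mul_le_mul_of_nonneg_left hR (Nat.cast_nonneg _))
    exact_mod_cast s2
  have s4 : (#(Zs A k 4) : ℝ) ≤ #(Zs A k 2) * R := by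
    have : (#(Zs A k 4) : ℝ) * #A ≤ (#(Zs A k 2) * R) * #A := by linarith
    exact le_of_mul_le_mul_right this hN0
  have s5 : (6 : ℝ) < #(Zs A k 2) := by
    have : (#(Zs A h 2) : ℝ) ≤ #(Zs A k 4) := by exact_mod_cast s1
    have h6 : 6 * R < #(Zs A k 2) * R := by linarith
    exact lt_of_mul_lt_mul_right h6 (by linarith)
  have s6 : 6 < #(Zs A k 2) := by exact_mod_cast s5
  by_contra hcon
  have hsub : Zs A k 2 ⊆ ({w ∈ Zs A k 2 | trc w = 0} ∪ {w ∈ Zs A k 2 | trc w = 2}) ∪ {w ∈ Zs A k 2 | trc w = -2} := by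
    intro w hw
    by_cases c1 : trc w = 0
    · exact mem_union_left _ (mem_union_left _ (mem_filter.2 ⟨hw, c1⟩))
    by_cases c2 : trc w = 2
    · exact mem_union_left _ (mem_union_right _ (mem_filter.2 ⟨hw, c2⟩))
    by_cases c3 : trc w = -2
    · exact mem_union_right _ (mem_filter.2 ⟨hw, c3⟩)
    exfalso
    apply hcon
    rw [mem_Zs] at hw
    refine ⟨w, pw_sub h1 (by norm_num) hw.1, hw.2, c1, ?_⟩
    intro h4
    have : (trc w - 2) * (trc w + 2) = 0 := by linear_combination h4
    rcases mul_eq_zero.1 this with h | h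
    · exact c2 (by linear_combination h)
    · exact c3 (by linear_combination h)
  have tb : ∀ t, #{w ∈ Zs A k 2 | trc w = t} ≤ 2 := by
    intro t
    apply trace_le_two h2 hh' t
    intro w hw
    rw [mem_filter, mem_Zs] at hw
    exact ⟨hw.1.2, hw.2⟩
  have := (card_le_card hsub).trans ((card_union_le _ _).trans (add_le_add (card_union_le _ _) le_rfl))
  have t1 := tb 0
  have t2 := tb 2
  have t3 := tb (-2)
  omega

lemma pivot_all {A : Finset SLF} (h2 : (2 : F) ≠ 0) (h1 : 1 ∈ A) (hinv : A⁻¹ = A)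
    (hgen : Subgroup.closure (A : Set SLF) = ⊤) {R : ℝ} (hR1 : 1 ≤ R) (hR : (#(pw A 34) : ℝ) ≤ R * #A)
    (hN : 373248 * R ^ 5 < #A) (g : SLF) :
    ∀ h : SLF, trc h ^ 2 ≠ 4 → (Piv A h ↔ Piv A (g * h * g⁻¹)) := by
  have hg : g ∈ Subgroup.closure (A : Set SLF) := by rw [hgen]; trivial
  induction hg using Subgroup.closure_induction with
  | mem a ha =>
    intro h hh
    have ha : a ∈ A := by simpa using ha
    have ha' : a⁻¹ ∈ A := by rw [← hinv]; exact Finset.inv_mem_inv ha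
    refine ⟨fun hP => pivot h2 h1 hinv hgen hR1 hR hN hh hP ha, fun hP => ?_⟩
    have := pivot h2 h1 hinv hgen hR1 hR hN (by rw [trc_conj]; exact hh) hP ha'
    have e : a⁻¹ * (a * h * a⁻¹) * a⁻¹⁻¹ = h := by group
    rwa [e] at this
  | one => intro h _; simp
  | mul x y _ _ hx hy =>
    intro h hh
    rw [hy h hh, hx _ (by rw [trc_conj]; exact hh)]
    have e : x * (y * h * y⁻¹) * x⁻¹ = x * y * h * (x * y)⁻¹ := by group
    rw [e]
  | inv x _ hx =>
    intro h hh
    have := hx (x⁻¹ * h * x⁻¹⁻¹) (by rw [trc_conj]; exact hh)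
    rw [this]
    have e : x * (x⁻¹ * h * x⁻¹⁻¹) * x⁻¹ = h := by group
    rw [e]
end prod2

open Finset Pointwise

section prod3
variable {F : Type*} [Field F] [DecidableEq F] [Fintype F]

local notation "SLF" => Matrix.SpecialLinearGroup (Fin 2) F

lemma exists_abc (q : Fˣ × F × F) : ∃ g : SLF, g.1 0 0 = q.1 ∧ g.1 0 1 = q.2.1 ∧ g.1 1 0 = q.2.2 := by
  refine ⟨⟨!![(q.1 : F), q.2.1; q.2.2, (1 + q.2.1 * q.2.2) * (q.1⁻¹ : Fˣ)], ?_⟩, by simp, by simp, by simp⟩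
  rw [Matrix.det_fin_two_of]
  have := q.1.mul_inv
  linear_combination (1 + q.2.1 * q.2.2) * this

lemma card_ge : (Fintype.card F - 1) * Fintype.card F ^ 2 ≤ Fintype.card SLF := by
  choose f hf using exists_abc (F := F)
  have : Function.Injective f := by
    intro q q' e
    have h1 := hf q
    have h2 := hf q'
    rw [e] at h1
    refine Prod.ext (Units.ext (h1.1.symm.trans h2.1)) (Prod.ext (h1.2.1.symm.trans h2.2.1) (h1.2.2.symm.trans h2.2.2))
  have := Fintype.card_le_of_injective _ this
  rw [Fintype.card_prod, Fintype.card_prod, Fintype.card_units] at this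
  rw [sq]; exact this

lemma card_le : Fintype.card SLF ≤ Fintype.card F ^ 4 := by
  have : Function.Injective (fun g : SLF => (g.1 0 0, g.1 0 1, g.1 1 0, g.1 1 1)) := by
    intro g h e
    simp only [Prod.mk.injEq] at e
    exact sl_ext e.1 e.2.1 e.2.2.1 e.2.2.2
  have := Fintype.card_le_of_injective _ this
  simp only [Fintype.card_prod] at this
  calc _ ≤ _ := this
    _ = _ := by ring

lemma final_count {A : Finset SLF} (h2 : (2 : F) ≠ 0) (h3 : (3 : F) ≠ 0) (h1 : 1 ∈ A) (hinv : A⁻¹ = A)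
    (hgen : Subgroup.closure (A : Set SLF) = ⊤) {R : ℝ} (hR1 : 1 ≤ R) (hR : (#(pw A 34) : ℝ) ≤ R * #A)
    (hN : 373248 * R ^ 5 < #A) :
    (Fintype.card SLF : ℝ) ^ 3 ≤ 2985984 * (Fintype.card F : ℝ) ^ 3 * R ^ 5 * (#A : ℝ) ^ 2 := by
  obtain ⟨h, hh6, ht0, ht⟩ := start h2 h3 h1 hinv hgen
  have hP : Piv A h := ⟨h, hh6, rfl, ht0, ht⟩
  have hPall : ∀ g : SLF, Piv A (g * h * g⁻¹) := fun g =>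
    (pivot_all h2 h1 hinv hgen hR1 hR hN g h ht).1 hP
  have hN0 : (0 : ℝ) < #A := by exact_mod_cast card_pos.2 ⟨1, h1⟩
  let Cl : Finset SLF := univ.image (fun g => g * h * g⁻¹)
  have hCl : ∀ k ∈ Cl, trc k = trc h ∧ Piv A k := by
    intro k hk
    obtain ⟨g, -, rfl⟩ := mem_image.1 hk
    exact ⟨trc_conj _ _, hPall g⟩
  have hne : Cl.Nonempty := ⟨_, mem_image_of_mem _ (mem_univ 1)⟩
  obtain ⟨k0, hk0, hmin⟩ := exists_min_image Cl (fun k => #(Zs A k 2)) hne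
  -- centralizer size
  have c1 : Fintype.card SLF ≤ (2 * Fintype.card F) * #Cl := by
    rw [← card_univ]
    apply card_le_mul_card_image
    intro b _
    rcases ({a ∈ (univ : Finset SLF) | a * h * a⁻¹ = b}).eq_empty_or_nonempty with h0 | ⟨a0, ha0⟩
    · rw [h0]; simp
    · rw [mem_filter] at ha0
      have : #{a ∈ (univ : Finset SLF) | a * h * a⁻¹ = b} ≤ #{w : SLF | w * h = h * w} := by
        apply card_le_card_of_injOn (fun a => a0⁻¹ * a)
        · intro a ha
          simp only [mem_coe, mem_filter, mem_univ, true_and] at ha ⊢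
          exact (conj_inj_fib (ha.trans ha0.2.symm)).symm
        · intro a _ b _ e
          exact mul_left_cancel e
      refine this.trans ?_
      rw [← card_univ (α := F)]
      apply card_le_mul_card_image_of_maps_to (f := trc)
      · intro _ _; exact mem_univ _
      · intro t _
        apply trace_le_two h2 ht t
        intro w hw
        simp only [mem_filter, mem_univ, true_and] at hw
        exact hw
  -- double counting
  let Zn : SLF → Finset SLF := fun k => {w ∈ Zs A k 2 | trc w ^ 2 ≠ 4}
  have c2 : ∀ k ∈ Cl, #(Zs A k 2) ≤ #(Zn k) + 4 := by
    intro k hk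
    have htk : trc k ^ 2 ≠ 4 := by rw [(hCl k hk).1]; exact ht
    have hsub : Zs A k 2 ⊆ (Zn k ∪ {w ∈ Zs A k 2 | trc w = 2}) ∪ {w ∈ Zs A k 2 | trc w = -2} := by
      intro w hw
      by_cases c2 : trc w = 2
      · exact mem_union_left _ (mem_union_right _ (mem_filter.2 ⟨hw, c2⟩))
      by_cases c3 : trc w = -2
      · exact mem_union_right _ (mem_filter.2 ⟨hw, c3⟩)
      refine mem_union_left _ (mem_union_left _ (mem_filter.2 ⟨hw, ?_⟩))
      intro h4
      have : (trc w - 2) * (trc w + 2) = 0 := by linear_combination h4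
      rcases mul_eq_zero.1 this with h | h
      · exact c2 (by linear_combination h)
      · exact c3 (by linear_combination h)
    have tb : ∀ t, #{w ∈ Zs A k 2 | trc w = t} ≤ 2 := by
      intro t
      apply trace_le_two h2 htk t
      intro w hw
      rw [mem_filter, mem_Zs] at hw
      exact ⟨hw.1.2, hw.2⟩
    have := (card_le_card hsub).trans ((card_union_le _ _).trans (add_le_add (card_union_le _ _) le_rfl))
    have t2 := tb 2
    have t3 := tb (-2)
    omega
  have c3 : ∑ k ∈ Cl, #(Zn k) ≤ 2 * #(pw A 2) := by
    rw [← card_sigma]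
    apply card_le_mul_card_image_of_maps_to (f := fun q => q.2)
    · rintro ⟨k, w⟩ hq
      simp only [mem_sigma, Zn, mem_filter, mem_Zs] at hq
      exact hq.2.1.1
    · intro w hw
      by_cases hw4 : trc w ^ 2 = 4
      · have : ({q ∈ Cl.sigma Zn | q.2 = w}) = ∅ := by
          apply filter_eq_empty_iff.2
          rintro ⟨k, w'⟩ hq rfl
          simp only [mem_sigma, Zn, mem_filter, mem_Zs] at hq
          exact hq.2.2 hw4
        rw [this]; simp
      · refine le_trans ?_ (trace_le_two h2 hw4 (trc h) {k ∈ Cl | k * w = w * k} ?_)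
        · apply card_le_card_of_injOn (fun q => q.1)
          · rintro ⟨k, w'⟩ hq
            simp only [mem_coe, mem_filter, mem_sigma, Zn, mem_Zs] at hq
            obtain ⟨⟨q1, q2⟩, rfl⟩ := hq
            simp only [mem_coe, mem_filter]
            exact ⟨q1, q2.1.2.symm⟩
          · rintro ⟨k, w'⟩ hq ⟨k', w''⟩ hq' e
            simp only [mem_coe, mem_filter] at hq hq' e
            obtain ⟨-, rfl⟩ := hq
            obtain ⟨-, rfl⟩ := hq'
            subst e; rfl
        · intro k hk
          rw [mem_filter] at hk
          exact ⟨hk.2, (hCl k hk.1).1⟩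
  have c4 : #Cl * #(Zs A k0 2) ≤ 2 * #(pw A 2) + 4 * #Cl := by
    calc #Cl * #(Zs A k0 2) = ∑ k ∈ Cl, #(Zs A k0 2) := by rw [sum_const, smul_eq_mul]
      _ ≤ ∑ k ∈ Cl, (#(Zn k) + 4) := sum_le_sum fun k hk => (hmin k hk).trans (c2 k hk)
      _ = ∑ k ∈ Cl, #(Zn k) + 4 * #Cl := by rw [sum_add_distrib, sum_const, smul_eq_mul]; ring
      _ ≤ _ := Nat.add_le_add_right c3 _
  have c5 : (#(pw A 2) : ℝ) ≤ R * #A := le_trans (Nat.cast_le.2 (card_le_card (pw_sub h1 (by norm_num)))) hR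
  have big := cent_big h2 h1 hinv hgen hR1 hR hN (hCl k0 hk0).2
  have low := cent_lower h2 h1 hinv hgen hR1 hR (hCl k0 hk0).2
  have c4' : (#Cl : ℝ) * #(Zs A k0 2) ≤ 2 * #(pw A 2) + 4 * #Cl := by exact_mod_cast c4
  have c1' : (Fintype.card SLF : ℝ) ≤ 2 * Fintype.card F * #Cl := by exact_mod_cast c1
  have hCl0 : (0 : ℝ) ≤ #Cl := Nat.cast_nonneg _
  have hz0 : (0 : ℝ) ≤ #(Zs A k0 2) := Nat.cast_nonneg _
  have hn0 : (0 : ℝ) ≤ Fintype.card SLF := Nat.cast_nonneg _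
  have hq0 : (0 : ℝ) ≤ Fintype.card F := Nat.cast_nonneg _
  generalize (Fintype.card SLF : ℝ) = n at *
  generalize (Fintype.card F : ℝ) = q at *
  generalize (#Cl : ℝ) = cl at *
  generalize (#(Zs A k0 2) : ℝ) = z at *
  generalize (#A : ℝ) = N at *
  have d1 : cl * z ≤ 6 * (R * N) := by
    have : cl * 6 ≤ cl * z := mul_le_mul_of_nonneg_left (by linarith) hCl0
    linarith
  have d2 : (cl * z) ^ 3 ≤ (6 * (R * N)) ^ 3 := pow_le_pow_left₀ (by positivity) d1 3
  have d3 : cl ^ 3 * N ≤ (373248 * R ^ 5 * N ^ 2) * N := by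
    calc cl ^ 3 * N ≤ cl ^ 3 * (1728 * R ^ 2 * z ^ 3) := mul_le_mul_of_nonneg_left low (by positivity)
      _ = 1728 * R ^ 2 * (cl * z) ^ 3 := by ring
      _ ≤ 1728 * R ^ 2 * (6 * (R * N)) ^ 3 := mul_le_mul_of_nonneg_left d2 (by positivity)
      _ = _ := by ring
  have d4 := le_of_mul_le_mul_right d3 hN0
  calc n ^ 3 ≤ (2 * q * cl) ^ 3 := pow_le_pow_left₀ hn0 c1' 3
    _ = 8 * q ^ 3 * cl ^ 3 := by ring
    _ ≤ 8 * q ^ 3 * (373248 * R ^ 5 * N ^ 2) := mul_le_mul_of_nonneg_left d4 (by positivity)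
    _ = _ := by ring

/-- product theorem -/
lemma product_thm {A : Finset SLF} (h2 : (2 : F) ≠ 0) (h3 : (3 : F) ≠ 0) (h1 : 1 ∈ A) (hinv : A⁻¹ = A)
    (hgen : Subgroup.closure (A : Set SLF) = ⊤) {R : ℝ} (hR1 : 1 ≤ R) (hR : (#(A ^ 34) : ℝ) ≤ R * #A)
    (hN : 373248 * R ^ 5 < #A) :
    (Fintype.card SLF : ℝ) ≤ 2500 * R ^ 3 * #A := by
  have hR' : (#(pw A 34) : ℝ) ≤ R * #A := by unfold pw; exact hR
  have fc := final_count h2 h3 h1 hinv hgen hR1 hR' hN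
  have cg := card_ge (F := F)
  have hN0 : (0 : ℝ) < #A := by exact_mod_cast card_pos.2 ⟨1, h1⟩
  have hq2 : 2 ≤ Fintype.card F := Fintype.one_lt_card
  have hn0 : (0 : ℝ) < Fintype.card SLF := by exact_mod_cast Fintype.card_pos
  have cg' : ((Fintype.card F : ℝ) - 1) * (Fintype.card F : ℝ) ^ 2 ≤ Fintype.card SLF := by
    have : (((Fintype.card F - 1 : ℕ)) : ℝ) = (Fintype.card F : ℝ) - 1 := by
      rw [Nat.cast_sub (by omega)]; simp
    rw [← this]; exact_mod_cast cg
  have hq : (2 : ℝ) ≤ Fintype.card F := by exact_mod_cast hq2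
  generalize (Fintype.card SLF : ℝ) = n at *
  generalize (Fintype.card F : ℝ) = q at *
  generalize (#A : ℝ) = N at *
  have e1 : q ^ 3 ≤ 2 * n := by nlinarith [sq_nonneg q]
  have e2 : n ^ 2 ≤ 5971968 * R ^ 5 * N ^ 2 := by
    have : n * n ^ 2 ≤ n * (5971968 * R ^ 5 * N ^ 2) := by
      calc n * n ^ 2 = n ^ 3 := by ring
        _ ≤ _ := fc
        _ = q ^ 3 * (2985984 * R ^ 5 * N ^ 2) := by ring
        _ ≤ (2 * n) * (2985984 * R ^ 5 * N ^ 2) := mul_le_mul_of_nonneg_right e1 (by positivity)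
        _ = _ := by ring
    exact le_of_mul_le_mul_left this hn0
  have e3 : R ^ 5 ≤ R ^ 6 := pow_le_pow_right₀ hR1 (by norm_num)
  have e4 : n ^ 2 ≤ (2500 * R ^ 3 * N) ^ 2 := by
    calc n ^ 2 ≤ 5971968 * R ^ 5 * N ^ 2 := e2
      _ ≤ 6250000 * R ^ 6 * N ^ 2 := by
        apply mul_le_mul_of_nonneg_right _ (by positivity)
        apply mul_le_mul (by norm_num) e3 (by positivity) (by norm_num)
      _ = _ := by ring
  exact (pow_le_pow_iff_left₀ hn0.le (by positivity) two_ne_zero).1 e4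
end prod3

open Finset Pointwise

section quasi
variable {p : ℕ} [Fact p.Prime]
local notation "SLp" => Matrix.SpecialLinearGroup (Fin 2) (ZMod p)

/-- upper unipotent -/
def uu (t : ZMod p) : SLp := ⟨!![1, t; 0, 1], by simp [Matrix.det_fin_two]⟩
/-- lower unipotent -/
def ll (t : ZMod p) : SLp := ⟨!![1, 0; t, 1], by simp [Matrix.det_fin_two]⟩
/-- Weyl -/
def wey : SLp := ⟨!![0, 1; -1, 0], by simp [Matrix.det_fin_two]⟩
/-- diagonal -/
def dgl (a : ZMod p) (h : a ≠ 0) : SLp := ⟨!![a, 0; 0, a⁻¹], by simp [Matrix.det_fin_two, h]⟩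

lemma uu_mul (s t : ZMod p) : uu s * uu t = uu (s + t) := by
  apply sl_ext <;> simp only [sl_m00, sl_m01, sl_m10, sl_m11] <;> simp [uu, add_comm]

lemma uu_zero : uu (0 : ZMod p) = 1 := by
  apply sl_ext <;> simp only [sl_o00, sl_o01, sl_o10, sl_o11] <;> simp [uu]

lemma uu_nat (n : ℕ) : uu (n : ZMod p) = uu 1 ^ n := by
  induction n with
  | zero => simp [uu_zero]
  | succ n ih => rw [pow_succ, ← ih, uu_mul]; simp

lemma uu_pow (t : ZMod p) : uu t = uu 1 ^ t.val := by
  rw [← uu_nat, ZMod.natCast_zmod_val]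

lemma dgl_conj (a : ZMod p) (h : a ≠ 0) : uu 1 * dgl a⁻¹ (inv_ne_zero h) =
    dgl a⁻¹ (inv_ne_zero h) * uu (a ^ 2) := by
  apply sl_ext <;> simp only [sl_m00, sl_m01, sl_m10, sl_m11] <;> simp [uu, dgl]
  field_simp

lemma wey_conj (t : ZMod p) : wey * uu (-t) * wey⁻¹ = ll t := by
  apply sl_ext <;> simp only [sl_m00, sl_m01, sl_m10, sl_m11, sl_i00, sl_i01, sl_i10, sl_i11] <;>
    simp [uu, wey, ll]

lemma gen_uu (N : Subgroup SLp) [hN : N.Normal] (h : uu 1 ∈ N) (g : SLp) : g ∈ N := by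
  have hu : ∀ t : ZMod p, uu t ∈ N := fun t => by rw [uu_pow]; exact N.pow_mem h _
  have hl : ∀ t : ZMod p, ll t ∈ N := fun t => by
    rw [← wey_conj]; exact hN.conj_mem _ (hu _) _
  have key : ∀ g : SLp, g.1 1 0 ≠ 0 → g ∈ N := by
    intro g hg
    have : g = uu ((g.1 0 0 - 1) / g.1 1 0) * ll (g.1 1 0) * uu ((g.1 1 1 - 1) / g.1 1 0) := by
      have hd := sl_det g
      apply sl_ext <;> simp only [sl_m00, sl_m01, sl_m10, sl_m11] <;> simp [uu, ll]
      · field_simp; ring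
      · field_simp
        linear_combination -hd
      · field_simp; ring
    rw [this]
    exact N.mul_mem (N.mul_mem (hu _) (hl _)) (hu _)
  by_cases hg : g.1 1 0 = 0
  · have : ll 1 * g ∈ N := by
      apply key
      have hd := sl_det g
      rw [sl_m10, hg]
      intro h0
      simp [ll] at h0
      simp [h0, hg] at hd
    exact (N.mul_mem_cancel_left (hl 1)).1 this
  · exact key g hg

/-- eigenvalue not one -/
lemma exists_eig {p : ℕ} {W : Type*} [AddCommGroup W] [Module ℂ W] [FiniteDimensional ℂ W]
    (A : Module.End ℂ W) (hp : 0 < p) (hA : A ^ p = 1) (h1 : A ≠ 1) :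
    ∃ ζ : ℂ, ζ ≠ 1 ∧ ζ ^ p = 1 ∧ ∃ v : W, v ≠ 0 ∧ A v = ζ • v := by
  let V := LinearMap.range (A - 1)
  have hV : ∀ v ∈ V, A v ∈ V := by
    rintro _ ⟨w, rfl⟩
    exact ⟨A w, by simp⟩
  have : Nontrivial V := by
    rw [Submodule.nontrivial_iff_ne_bot]
    intro h
    rw [LinearMap.range_eq_bot] at h
    exact h1 (sub_eq_zero.1 h)
  obtain ⟨ζ, hζ⟩ := Module.End.exists_eigenvalue (A.restrict hV)
  obtain ⟨v, hv⟩ := hζ.exists_hasEigenvector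
  have hv1 : A v.1 = ζ • v.1 := by
    have := congrArg Subtype.val hv.apply_eq_smul
    simpa using this
  have hv0 : v.1 ≠ 0 := by simpa using hv.2
  have hpow : ∀ n : ℕ, (A ^ n) v.1 = ζ ^ n • v.1 := by
    intro n
    induction n with
    | zero => simp
    | succ n ih => rw [pow_succ, Module.End.mul_apply, hv1, map_smul, ih, smul_smul, pow_succ, mul_comm]
  obtain ⟨w, hw⟩ := v.2
  refine ⟨ζ, ?_, ?_, v.1, hv0, hv1⟩
  · intro h
    have h2 : (∑ i ∈ range p, A ^ i) * (A - 1) = 0 := by rw [geom_sum_mul, hA, sub_self]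
    have h3 := congrArg (fun B : Module.End ℂ W => B w) h2
    simp only [Module.End.mul_apply, hw, LinearMap.zero_apply, LinearMap.sum_apply, hpow, h, one_pow, one_smul,
      sum_const, card_range] at h3
    rw [← Nat.cast_smul_eq_nsmul ℂ, smul_eq_zero] at h3
    rcases h3 with h3 | h3
    · have : p = 0 := by exact_mod_cast h3
      omega
    · exact hv0 h3
  · have := hpow p
    rw [hA, Module.End.one_apply] at this
    have h3 : (ζ ^ p - 1) • v.1 = 0 := by rw [sub_smul, one_smul, ← this, sub_self]
    rw [smul_eq_zero] at h3
    exact sub_eq_zero.1 (h3.resolve_right hv0)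

lemma zeta_inj {ζ : ℂ} (h1 : ζ ≠ 1) (hp : ζ ^ p = 1) : Function.Injective (fun b : ZMod p => ζ ^ b.val) := by
  have ho : orderOf ζ = p := orderOf_eq_prime hp h1
  intro a b hab
  have := pow_injOn_Iio_orderOf (x := ζ) (by rw [ho]; exact ZMod.val_lt a) (by rw [ho]; exact ZMod.val_lt b) hab
  exact ZMod.val_injective p this

lemma card_sq_ge : p - 1 ≤ 2 * #((univ.filter (fun a : ZMod p => a ≠ 0)).image (fun a => a ^ 2)) := by
  have h : #(univ.filter (fun a : ZMod p => a ≠ 0)) = p - 1 := by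
    rw [filter_ne', card_erase_of_mem (mem_univ _), card_univ, ZMod.card]
  rw [← h]
  rw [mul_comm]
  refine card_le_mul_card_image _ _ ?_ |>.trans (by rw [mul_comm])
  intro b hb
  obtain ⟨a, ha, rfl⟩ := mem_image.1 hb
  refine (card_le_card (t := {a, -a}) ?_).trans card_le_two
  intro x hx
  simp only [mem_filter] at hx
  have := sq_eq_sq_iff_eq_or_eq_neg.1 hx.2
  simpa using this

lemma dim_ge {W : Type*} [AddCommGroup W] [Module ℂ W] [FiniteDimensional ℂ W]
    (ρ : SLp →* Module.End ℂ W) (h : ρ (uu 1) ≠ 1) : p - 1 ≤ 2 * Module.finrank ℂ W := by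
  have hp : 0 < p := (Fact.out : p.Prime).pos
  have hA : ρ (uu 1) ^ p = 1 := by
    rw [← map_pow, ← uu_nat, CharP.cast_eq_zero, uu_zero, map_one]
  obtain ⟨ζ, h1, hz, v, hv0, hv⟩ := exists_eig (p := p) _ hp hA h
  have hpow : ∀ n : ℕ, (ρ (uu 1) ^ n) v = ζ ^ n • v := by
    intro n
    induction n with
    | zero => simp
    | succ n ih => rw [pow_succ, Module.End.mul_apply, hv, map_smul, ih, smul_smul, pow_succ, mul_comm]
  set S := (univ.filter (fun a : ZMod p => a ≠ 0)).image (fun a => a ^ 2) with hS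
  refine card_sq_ge.trans (Nat.mul_le_mul_left _ ?_)
  rw [← hS]
  have hex : ∀ b : S, ∃ x : W, (ρ (uu 1)).HasEigenvector (ζ ^ b.1.val) x := by
    rintro ⟨b, hb⟩
    obtain ⟨a, ha, rfl⟩ := mem_image.1 hb
    have ha0 : a ≠ 0 := by simpa using ha
    refine ⟨ρ (dgl a⁻¹ (inv_ne_zero ha0)) v, ?_⟩
    rw [Module.End.hasEigenvector_iff, Module.End.mem_eigenspace_iff]
    constructor
    · rw [← Module.End.mul_apply, ← map_mul, dgl_conj a ha0, map_mul, Module.End.mul_apply, uu_pow, map_pow,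
        hpow, map_smul]
    · intro h0
      apply hv0
      have : ρ (dgl a⁻¹ (inv_ne_zero ha0))⁻¹ (ρ (dgl a⁻¹ (inv_ne_zero ha0)) v) = 0 := by rw [h0, map_zero]
      rwa [← Module.End.mul_apply, ← map_mul, inv_mul_cancel, map_one] at this
  choose x hx using hex
  have li := Module.End.eigenvectors_linearIndependent' (ρ (uu 1)) (fun b : S => ζ ^ b.1.val)
    (fun a b hab => Subtype.ext (zeta_inj h1 hz hab)) x hx
  have := li.fintype_card_le_finrank
  simpa using this

lemma sym_bound {E : Type*} [NormedAddCommGroup E] [InnerProductSpace ℂ E] [FiniteDimensional ℂ E]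
    (T : E →ₗ[ℂ] E) (hT : T.IsSymmetric) (B : ℝ)
    (hB : ∀ (l : ℝ) (v : E), v ≠ 0 → T v = (l : ℂ) • v → l ^ 2 ≤ B) (x : E) :
    ‖T x‖ ^ 2 ≤ B * ‖x‖ ^ 2 := by
  let b := hT.eigenvectorBasis rfl
  rw [← b.sum_sq_norm_inner_right (T x), ← b.sum_sq_norm_inner_right x, Finset.mul_sum]
  refine Finset.sum_le_sum fun i _ => ?_
  have h1 : T (b i) = (hT.eigenvalues rfl i : ℂ) • b i := hT.apply_eigenvectorBasis rfl i
  have h2 := hB _ _ (b.orthonormal.ne_zero i) h1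
  rw [← hT (b i) x, h1, inner_smul_left, norm_mul, mul_pow]
  refine mul_le_mul_of_nonneg_right ?_ (sq_nonneg _)
  simpa using h2

variable {G : Type*} [Group G] [Fintype G]

/-- left convolution operator -/
noncomputable def cop (f : G → ℝ) : EuclideanSpace ℂ G →ₗ[ℂ] EuclideanSpace ℂ G where
  toFun φ := WithLp.toLp 2 (fun x => ∑ y, (f (x * y⁻¹) : ℂ) * φ y)
  map_add' a b := by
    ext x; simp [mul_add, Finset.sum_add_distrib]
  map_smul' c a := by
    ext x; simp only [PiLp.smul_apply, smul_eq_mul, RingHom.id_apply, Finset.mul_sum]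
    exact Finset.sum_congr rfl fun y _ => by ring

/-- right translation -/
noncomputable def rtr : G →* Module.End ℂ (EuclideanSpace ℂ G) where
  toFun g := 
    { toFun := fun φ => WithLp.toLp 2 (fun x => φ (x * g))
      map_add' := fun a b => by ext x; simp
      map_smul' := fun c a => by ext x; simp }
  map_one' := by ext φ x; simp
  map_mul' a b := by ext φ x; simp [mul_assoc]

lemma cop_apply (f : G → ℝ) (φ : EuclideanSpace ℂ G) (x : G) :
    cop f φ x = ∑ y, (f (x * y⁻¹) : ℂ) * φ y := rfl
lemma rtr_apply (g : G) (φ : EuclideanSpace ℂ G) (x : G) : rtr g φ x = φ (x * g) := rfl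

lemma cop_rtr (f : G → ℝ) (g : G) (φ : EuclideanSpace ℂ G) : cop f (rtr g φ) = rtr g (cop f φ) := by
  ext x
  rw [cop_apply, rtr_apply, cop_apply]
  refine Fintype.sum_equiv (Equiv.mulRight g) _ _ fun y => ?_
  simp [rtr_apply, mul_assoc]

lemma cop_symm (f : G → ℝ) (hf : ∀ x, f x⁻¹ = f x) : (cop f).IsSymmetric := by
  intro φ ψ
  simp only [PiLp.inner_apply, RCLike.inner_apply, cop_apply, map_sum, map_mul, Finset.mul_sum, Finset.sum_mul,
    Complex.conj_ofReal]
  rw [Finset.sum_comm]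
  refine Finset.sum_congr rfl fun x _ => Finset.sum_congr rfl fun y _ => ?_
  rw [← hf (y * x⁻¹)]
  simp only [mul_inv_rev, inv_inv]
  ring

lemma cop_sum (f : G → ℝ) (φ : EuclideanSpace ℂ G) :
    ∑ x, cop f φ x = (∑ x, (f x : ℂ)) * ∑ x, φ x := by
  simp only [cop_apply]
  rw [Finset.sum_comm, Finset.mul_sum]
  refine Finset.sum_congr rfl fun y _ => ?_
  rw [← Finset.sum_mul]
  congr 1
  exact Fintype.sum_equiv (Equiv.mulRight y⁻¹) _ _ fun x => rfl

lemma cop_conv (f h : G → ℝ) : cop f (WithLp.toLp 2 (fun x => (h x : ℂ))) =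
    WithLp.toLp 2 (fun x => (convG f h x : ℂ)) := by
  ext x
  rw [cop_apply]
  simp only [convG]
  push_cast
  refine Fintype.sum_equiv ((Equiv.inv G).trans (Equiv.mulLeft x)) _ _ fun y => ?_
  simp

lemma eig_dim_le (f : G → ℝ) (l : ℝ) (W : Submodule ℂ (EuclideanSpace ℂ G))
    (hW : ∀ v ∈ W, cop f v = (l : ℂ) • v) :
    Module.finrank ℂ W * l ^ 2 ≤ Fintype.card G * ∑ x, f x ^ 2 := by
  let b := stdOrthonormalBasis ℂ W
  have hon : Orthonormal ℂ (fun i => (b i : EuclideanSpace ℂ G)) :=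
    b.orthonormal.comp_linearIsometry W.subtypeₗᵢ
  let row : G → EuclideanSpace ℂ G := fun x => WithLp.toLp 2 (fun y => (f (x * y⁻¹) : ℂ))
  have hrow : ∀ x (φ : EuclideanSpace ℂ G), cop f φ x = inner ℂ (row x) φ := by
    intro x φ
    rw [cop_apply]
    simp only [PiLp.inner_apply, RCLike.inner_apply, row, Complex.conj_ofReal]
    exact Finset.sum_congr rfl fun y _ => by ring
  have hbes : ∀ x, ∑ i, ‖cop f (b i) x‖ ^ 2 ≤ ∑ y, f y ^ 2 := by
    intro x
    have := hon.sum_inner_products_le (row x) (s := Finset.univ)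
    refine (le_of_eq ?_).trans (this.trans (le_of_eq ?_))
    · refine Finset.sum_congr rfl fun i _ => ?_
      rw [hrow, norm_inner_symm]
    · rw [EuclideanSpace.norm_sq_eq]
      refine Fintype.sum_equiv ((Equiv.inv G).trans (Equiv.mulLeft x)) _ _ fun y => ?_
      simp [row]
  have hn : ∀ i, ∑ x, ‖cop f (b i) x‖ ^ 2 = l ^ 2 := by
    intro i
    rw [← EuclideanSpace.norm_sq_eq, hW _ (b i).2, norm_smul, hon.1 i]
    simp
  have e1 : ∑ i, ∑ x, ‖cop f (b i) x‖ ^ 2 = Module.finrank ℂ W * l ^ 2 := by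
    simp [hn]
  rw [← e1, Finset.sum_comm]
  refine (Finset.sum_le_sum fun x _ => hbes x).trans ?_
  simp

lemma quasirandom (f : SLp → ℝ) (hf : ∀ x, f x⁻¹ = f x) (h0 : ∑ x, f x = 0) :
    ((p : ℝ) - 1) * ∑ x, convG f f x ^ 2 ≤ 2 * Fintype.card SLp * (∑ x, f x ^ 2) ^ 2 := by
  have hp2 : 2 ≤ p := (Fact.out : p.Prime).two_le
  have hp : (0 : ℝ) < (p : ℝ) - 1 := by
    have : (2 : ℝ) ≤ p := by exact_mod_cast hp2
    linarith
  set B : ℝ := 2 * Fintype.card SLp * (∑ x, f x ^ 2) / ((p : ℝ) - 1) with hB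
  have hB0 : 0 ≤ B := by positivity
  have key := sym_bound (cop f) (cop_symm f hf) B ?_ (WithLp.toLp 2 (fun x => (f x : ℂ)))
  · rw [cop_conv, EuclideanSpace.norm_sq_eq, EuclideanSpace.norm_sq_eq] at key
    simp only [Complex.norm_real, Real.norm_eq_abs, sq_abs] at key
    rw [hB, div_mul_eq_mul_div, le_div_iff₀ hp] at key
    linarith [key]
  · intro l v hv0 hv
    by_cases hl : l = 0
    · rw [hl]; simpa using hB0
    let W := Module.End.eigenspace (cop f) (l : ℂ)
    have hW : ∀ v ∈ W, cop f v = (l : ℂ) • v := fun v hv => Module.End.mem_eigenspace_iff.1 hv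
    have hWr : ∀ g : SLp, ∀ v ∈ W, rtr g v ∈ W := by
      intro g v hv
      rw [Module.End.mem_eigenspace_iff, cop_rtr, hW v hv, map_smul]
    let ρ : SLp →* Module.End ℂ W :=
      { toFun := fun g => (rtr g).restrict (hWr g)
        map_one' := by ext x; simp
        map_mul' := fun a b => by
          apply LinearMap.ext; intro x; apply Subtype.ext; simp }
    have hvW : v ∈ W := Module.End.mem_eigenspace_iff.2 hv
    have hne : ρ (uu 1) ≠ 1 := by
      intro h1
      have hker : ∀ g, g ∈ ρ.ker := gen_uu ρ.ker h1
      have hc : ∀ g, v g = v 1 := by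
        intro g
        have h2 : ρ g = 1 := hker g
        have h3 := congrArg (fun A : Module.End ℂ W => (A ⟨v, hvW⟩).1 1) h2
        have h4 : (rtr g v) 1 = v 1 := h3
        rwa [rtr_apply, one_mul] at h4
      have hs := cop_sum f v
      have h0' : (∑ x, (f x : ℂ)) = 0 := by exact_mod_cast h0
      rw [h0', zero_mul, hv] at hs
      simp only [PiLp.smul_apply, smul_eq_mul, hc, Finset.sum_const, nsmul_eq_mul] at hs
      have hl' : (l : ℂ) ≠ 0 := by exact_mod_cast hl
      have hcard : ((Finset.univ : Finset SLp).card : ℂ) ≠ 0 := by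
        rw [Finset.card_univ]; exact_mod_cast Fintype.card_ne_zero
      have hv1 : v 1 = 0 := by
        rcases mul_eq_zero.1 hs with h | h
        · exact absurd h hcard
        · exact (mul_eq_zero.1 h).resolve_left hl'
      apply hv0
      ext g
      rw [hc g, hv1]; rfl
    have hd := dim_ge ρ hne
    have he := eig_dim_le f l W hW
    have hd' : (p : ℝ) - 1 ≤ 2 * Module.finrank ℂ W := by
      have : ((p - 1 : ℕ) : ℝ) ≤ ((2 * Module.finrank ℂ W : ℕ) : ℝ) := by exact_mod_cast hd
      rw [Nat.cast_sub (by omega)] at this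
      push_cast at this; linarith
    rw [hB, le_div_iff₀ hp]
    nlinarith [mul_le_mul_of_nonneg_right hd' (sq_nonneg l)]
end quasi

open Finset Pointwise

section asm
variable {p : ℕ} [Fact p.Prime]
local notation "SLp" => Matrix.SpecialLinearGroup (Fin 2) (ZMod p)

lemma energy_eq {G : Type*} [Group G] [Fintype G] (μ : G → ℝ) (hs : ∀ x, μ x⁻¹ = μ x) (m : ℕ) :
    ∑ x, ∑ b, iterConv μ (2 * m + 1) x * iterConv μ (2 * m + 1) b * iterConv μ (2 * m + 1) (x * b)
      = ∑ x, iterConv μ (3 * m + 2) x ^ 2 := by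
  have hsy := iterConv_symm μ hs
  rw [← convG_one _ (hsy _), ← iterConv_add]
  have : 3 * m + 2 + (3 * m + 2) + 1 = (2 * m + 1) + (4 * m + 3) + 1 := by ring
  rw [this, iterConv_add]
  have h4 : iterConv μ (4 * m + 3) = convG (iterConv μ (2 * m + 1)) (iterConv μ (2 * m + 1)) := by
    rw [← iterConv_add]; congr 1; ring
  rw [convG]
  refine Finset.sum_congr rfl fun x _ => ?_
  rw [mul_one, hsy, h4, convG, Finset.mul_sum]
  refine Fintype.sum_equiv (Equiv.mulLeft x) _ _ fun b => ?_
  simp only [Equiv.coe_mulLeft, mul_inv_rev, mul_assoc, inv_mul_cancel, mul_one, hsy]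
  ring

lemma case_small (μ : SLp → ℝ) (h0 : ∀ x, 0 ≤ μ x) (h1 : ∑ x, μ x = 1) (hs : ∀ x, μ x⁻¹ = μ x)
    (m : ℕ) (D M : ℝ) (hD : 0 ≤ D) (hM : 0 < M) (hp : D * M ≤ p)
    (ha : ∑ x, iterConv μ m x ^ 2 ≤ D / Fintype.card SLp) :
    ∑ x, iterConv μ (4 * m + 3) x ^ 2 - (Fintype.card SLp : ℝ)⁻¹ ≤
      4 / M * (∑ x, iterConv μ m x ^ 2 - (Fintype.card SLp : ℝ)⁻¹) := by
  have hn : (0 : ℝ) < Fintype.card SLp := by exact_mod_cast Fintype.card_pos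
  have hsy := iterConv_symm μ hs
  have hsum := iterConv_sum μ h1
  have h4 : iterConv μ (4 * m + 3) = convG (iterConv μ (2 * m + 1)) (iterConv μ (2 * m + 1)) := by
    rw [← iterConv_add]; congr 1; ring
  have h2 : iterConv μ (2 * m + 1) = convG (iterConv μ m) (iterConv μ m) := by
    rw [← iterConv_add]; congr 1; ring
  have c1 : ∑ x, iterConv μ (4 * m + 3) x ^ 2 ≤ ∑ x, iterConv μ (2 * m + 1) x ^ 2 := by
    rw [h4]; exact convG_sq_le _ _ (iterConv_nonneg μ h0 _) (hsum _)
  have q := quasirandom (fun x => iterConv μ m x - (Fintype.card SLp : ℝ)⁻¹) (fun x => by rw [hsy]) ?_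
  · rw [convG_sub_unif _ _ (hsum m) (hsum m), ← h2, sum_sub_unif_sq _ (hsum _), sum_sub_unif_sq _ (hsum _)] at q
    have hg : 0 ≤ ∑ x, iterConv μ m x ^ 2 - (Fintype.card SLp : ℝ)⁻¹ := by
      rw [← sum_sub_unif_sq _ (hsum _)]; exact Finset.sum_nonneg fun x _ => sq_nonneg _
    have hp2 : (2 : ℝ) ≤ p := by exact_mod_cast (Fact.out : p.Prime).two_le
    have hi : 0 < (Fintype.card SLp : ℝ)⁻¹ := by positivity
    rw [le_div_iff₀ hn] at ha
    have hni : (Fintype.card SLp : ℝ) * (Fintype.card SLp : ℝ)⁻¹ = 1 := mul_inv_cancel₀ hn.ne'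
    generalize (∑ x, iterConv μ m x ^ 2) = a at *
    generalize (∑ x, iterConv μ (2 * m + 1) x ^ 2) = b at *
    generalize (∑ x, iterConv μ (4 * m + 3) x ^ 2) = c at *
    generalize (Fintype.card SLp : ℝ)⁻¹ = i at *
    generalize (Fintype.card SLp : ℝ) = n at *
    generalize (p : ℝ) = P at *
    have e1 : n * (a - i) ≤ D := by nlinarith
    have e2 : (P - 1) * (b - i) ≤ 2 * D * (a - i) := by
      calc _ ≤ 2 * n * (a - i) ^ 2 := q
        _ = 2 * (n * (a - i)) * (a - i) := by ring
        _ ≤ _ := by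
          apply mul_le_mul_of_nonneg_right _ hg
          linarith
    have e3 : (P - 1) * (M * (b - i)) ≤ (P - 1) * (4 * (a - i)) := by
      calc (P - 1) * (M * (b - i)) = M * ((P - 1) * (b - i)) := by ring
        _ ≤ M * (2 * D * (a - i)) := mul_le_mul_of_nonneg_left e2 hM.le
        _ = (D * M) * (2 * (a - i)) := by ring
        _ ≤ P * (2 * (a - i)) := mul_le_mul_of_nonneg_right hp (by linarith)
        _ ≤ (2 * (P - 1)) * (2 * (a - i)) := mul_le_mul_of_nonneg_right (by linarith) (by linarith)
        _ = _ := by ring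
    have e4 := le_of_mul_le_mul_left e3 (by linarith)
    rw [div_mul_eq_mul_div, le_div_iff₀ hM]
    nlinarith
  · rw [Finset.sum_sub_distrib, hsum]
    simp [hn.ne']

lemma case_large (hp5 : 5 ≤ p) (μ : SLp → ℝ) (h0 : ∀ x, 0 ≤ μ x) (h1 : ∑ x, μ x = 1)
    (hs : ∀ x, μ x⁻¹ = μ x)
    (m : ℕ) (K M : ℝ) (hM : 64 ≤ M) (hK : M ^ 10044 ≤ K)
    (hΓ : ∀ Γ : Subgroup SLp, Γ ≠ ⊤ → ∀ g : SLp, (∑ x, Set.indicator (g • (Γ : Set SLp)) μ x) ≤ K⁻¹)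
    (hmax : ∀ g, μ g ≤ K⁻¹)
    (hc : (∑ x, iterConv μ m x ^ 2) / M ≤ ∑ x, iterConv μ (4 * m + 3) x ^ 2) :
    ∑ x, iterConv μ m x ^ 2 ≤ M ^ 6092 / Fintype.card SLp := by
  have hn : (0 : ℝ) < Fintype.card SLp := by exact_mod_cast Fintype.card_pos
  have hsy := iterConv_symm μ hs
  have hsum := iterConv_sum μ h1
  have hM0 : (0 : ℝ) < M := by linarith
  have hM1 : (1 : ℝ) ≤ M := by linarith
  have hK0 : 0 < K := lt_of_lt_of_le (by positivity) hK
  have h2 : iterConv μ (2 * m + 1) = convG (iterConv μ m) (iterConv μ m) := by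
    rw [← iterConv_add]; congr 1; ring
  have h4 : iterConv μ (4 * m + 3) = convG (iterConv μ (3 * m + 2)) (iterConv μ m) := by
    rw [← iterConv_add]; congr 1; ring
  have c1 : ∑ x, iterConv μ (4 * m + 3) x ^ 2 ≤ ∑ x, iterConv μ (3 * m + 2) x ^ 2 := by
    rw [h4]; exact convG_sq_le _ _ (iterConv_nonneg μ h0 _) (hsum _)
  have ha : 0 < ∑ x, iterConv μ m x ^ 2 := by
    have := sum_sub_unif_sq _ (hsum m)
    have h3 : 0 ≤ ∑ x, (iterConv μ m x - (Fintype.card SLp : ℝ)⁻¹) ^ 2 := Finset.sum_nonneg fun x _ => sq_nonneg _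
    have hi : 0 < (Fintype.card SLp : ℝ)⁻¹ := by positivity
    linarith
  obtain ⟨H, hH1, hHi, hHa, hH34, u, hu⟩ := bsg_main (iterConv μ (2 * m + 1)) _ M ha hM
    (iterConv_nonneg μ h0 _) (hsum _) (fun x => by rw [h2]; exact convG_le _ x)
    (by rw [energy_eq μ hs]; exact hc.trans c1)
  have hex : ∃ u', (M ^ 40)⁻¹ < ∑ x ∈ H, μ (u' * x) := by
    by_contra hcon
    have hcon' : ∀ u', ∑ x ∈ H, μ (u' * x) ≤ (M ^ 40)⁻¹ := fun u' => not_lt.1 fun h => hcon ⟨u', h⟩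
    have h3 := iterConv_set_le μ h0 h1 H _ hcon' (2 * m + 1) u
    have h4 : M ^ 39 * ∑ x ∈ H, iterConv μ (2 * m + 1) (u * x) ≤ M ^ 39 * (M ^ 40)⁻¹ :=
      mul_le_mul_of_nonneg_left h3 (by positivity)
    have h5 : M ^ 39 * (M ^ 40)⁻¹ = M⁻¹ := by field_simp
    have h6 : M⁻¹ < 1 := inv_lt_one_of_one_lt₀ (by linarith)
    linarith
  obtain ⟨u', hu'⟩ := hex
  have hKi : K⁻¹ ≤ (M ^ 40)⁻¹ := by
    apply inv_anti₀ (by positivity)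
    exact (pow_le_pow_right₀ hM1 (by norm_num)).trans hK
  have hgen : Subgroup.closure (H : Set SLp) = ⊤ := by
    by_contra hne
    have h3 := hΓ _ hne u'
    have h4 : ∑ x ∈ H, μ (u' * x) ≤ ∑ x, Set.indicator (u' • ((Subgroup.closure (H : Set SLp)) : Set SLp)) μ x := by
      have e : ∑ x ∈ H, μ (u' * x) = ∑ x ∈ H, Set.indicator (u' • ((Subgroup.closure (H : Set SLp)) : Set SLp)) μ (u' * x) := by
        refine Finset.sum_congr rfl fun x hx => ?_
        rw [Set.indicator_of_mem]
        exact Set.smul_mem_smul_set (Subgroup.subset_closure hx)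
      rw [e]
      rw [← Fintype.sum_equiv (Equiv.mulLeft u') (fun x => Set.indicator (u' • ((Subgroup.closure (H : Set SLp)) : Set SLp)) μ (u' * x)) _ (fun x => rfl)]
      exact Finset.sum_le_sum_of_subset_of_nonneg (Finset.subset_univ _)
        fun x _ _ => Set.indicator_nonneg (fun y _ => h0 y) _
    linarith
  have hcard : K < #H * M ^ 40 := by
    have h3 : ∑ x ∈ H, μ (u' * x) ≤ #H * K⁻¹ := by
      refine (Finset.sum_le_card_nsmul H _ _ fun x _ => hmax _).trans (le_of_eq (nsmul_eq_mul _ _))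
    have h4 : (M ^ 40)⁻¹ < #H * K⁻¹ := lt_of_lt_of_le hu' h3
    rw [← div_eq_mul_inv, lt_div_iff₀ hK0, inv_mul_lt_iff₀ (by positivity)] at h4
    linarith
  have hbig : 373248 * (M ^ 2000) ^ 5 < (#H : ℝ) := by
    have e1 : M ^ 10044 = M ^ 4 * (M ^ 2000) ^ 5 * M ^ 40 := by
      rw [← pow_mul, ← pow_add, ← pow_add]
    have e2 : (373248 : ℝ) ≤ M ^ 4 := by
      have := pow_le_pow_left₀ (by norm_num) hM 4
      norm_num at this; linarith
    have e3 : M ^ 4 * (M ^ 2000) ^ 5 * M ^ 40 < #H * M ^ 40 := by rw [← e1]; linarith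
    have e4 := lt_of_mul_lt_mul_right e3 (by positivity)
    exact lt_of_le_of_lt (mul_le_mul_of_nonneg_right e2 (by positivity)) e4
  have hcast : ∀ k : ℕ, 0 < k → k < p → ((k : ℕ) : ZMod p) ≠ 0 := by
    intro k h1 h2 h
    rw [ZMod.natCast_eq_zero_iff] at h
    exact absurd (Nat.le_of_dvd h1 h) (by omega)
  have pt := product_thm (F := ZMod p) (A := H) (by exact_mod_cast hcast 2 (by norm_num) (by omega))
    (by exact_mod_cast hcast 3 (by norm_num) (by omega)) hH1 hHi hgen (R := M ^ 2000)
    (one_le_pow₀ hM1) hH34 hbig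
  rw [le_div_iff₀ hn]
  have e5 : (2500 : ℝ) ≤ M ^ 2 := by
    have := pow_le_pow_left₀ (by norm_num) hM 2
    norm_num at this; linarith
  calc (∑ x, iterConv μ m x ^ 2) * Fintype.card SLp
      ≤ (∑ x, iterConv μ m x ^ 2) * (2500 * (M ^ 2000) ^ 3 * #H) := mul_le_mul_of_nonneg_left pt ha.le
    _ = 2500 * (M ^ 2000) ^ 3 * (#H * ∑ x, iterConv μ m x ^ 2) := by ring
    _ ≤ M ^ 2 * (M ^ 2000) ^ 3 * M ^ 90 := by
      apply mul_le_mul (mul_le_mul_of_nonneg_right e5 (by positivity)) hHa (by positivity) (by positivity)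
    _ = M ^ 6092 := by rw [← pow_mul, ← pow_add, ← pow_add]

lemma step (hp5 : 5 ≤ p) (μ : SLp → ℝ) (h0 : ∀ x, 0 ≤ μ x) (h1 : ∑ x, μ x = 1)
    (hs : ∀ x, μ x⁻¹ = μ x)
    (m : ℕ) (K M : ℝ) (hM : 64 ≤ M) (hK : M ^ 30000 ≤ K)
    (hΓ : ∀ Γ : Subgroup SLp, Γ ≠ ⊤ → ∀ g : SLp, (∑ x, Set.indicator (g • (Γ : Set SLp)) μ x) ≤ K⁻¹)
    (hmax : ∀ g, μ g ≤ K⁻¹) :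
    ∑ x, iterConv μ (4 * m + 3) x ^ 2 - (Fintype.card SLp : ℝ)⁻¹ ≤
      4 / M * (∑ x, iterConv μ m x ^ 2 - (Fintype.card SLp : ℝ)⁻¹) := by
  have hn : (0 : ℝ) < Fintype.card SLp := by exact_mod_cast Fintype.card_pos
  have hM0 : (0 : ℝ) < M := by linarith
  have hM1 : (1 : ℝ) ≤ M := by linarith
  have hK0 : 0 < K := lt_of_lt_of_le (by positivity) hK
  by_cases hsm : ∑ x, iterConv μ m x ^ 2 ≤ M ^ 6092 / Fintype.card SLp
  · refine case_small μ h0 h1 hs m (M ^ 6092) M (by positivity) hM0 ?_ hsm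
    have hKn : K ≤ Fintype.card SLp := by
      have h3 : (1 : ℝ) ≤ Fintype.card SLp * K⁻¹ := by
        rw [← h1]
        refine (Finset.sum_le_card_nsmul _ _ _ fun x _ => hmax _).trans (le_of_eq ?_)
        rw [nsmul_eq_mul, Finset.card_univ]
      rw [← div_eq_mul_inv, le_div_iff₀ hK0] at h3
      linarith
    have h4 : (Fintype.card SLp : ℝ) ≤ (p : ℝ) ^ 4 := by
      have := card_le (F := ZMod p)
      rw [ZMod.card] at this
      exact_mod_cast this
    have h5 : (M ^ 6092 * M) ^ 4 ≤ (p : ℝ) ^ 4 := by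
      rw [← pow_succ, ← pow_mul]
      exact (pow_le_pow_right₀ hM1 (by norm_num)).trans (hK.trans (hKn.trans h4))
    exact (pow_le_pow_iff_left₀ (by positivity) (by positivity) (by norm_num)).1 h5
  · by_contra hcon
    apply hsm
    refine case_large hp5 μ h0 h1 hs m K M hM ((pow_le_pow_right₀ hM1 (by norm_num)).trans hK) hΓ hmax ?_
    have hcon := not_le.1 hcon
    have hsm := not_le.1 hsm
    have hi : 0 < (Fintype.card SLp : ℝ)⁻¹ := by positivity
    have h2 : (2 : ℝ) ≤ M ^ 6092 := by
      calc (2 : ℝ) ≤ M := by linarith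
        _ = M ^ 1 := (pow_one M).symm
        _ ≤ M ^ 6092 := pow_le_pow_right₀ hM1 (by norm_num)
    rw [div_eq_mul_inv] at hsm
    have h3 : 2 * (Fintype.card SLp : ℝ)⁻¹ < ∑ x, iterConv μ m x ^ 2 :=
      lt_of_le_of_lt (mul_le_mul_of_nonneg_right h2 hi.le) hsm
    generalize (∑ x, iterConv μ m x ^ 2) = a at *
    generalize (∑ x, iterConv μ (4 * m + 3) x ^ 2) = c at *
    generalize (Fintype.card SLp : ℝ)⁻¹ = i at *
    rw [div_mul_eq_mul_div, div_lt_iff₀ hM0] at hcon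
    rw [div_le_iff₀ hM0]
    nlinarith

lemma f_antitone {G : Type*} [Group G] [Fintype G] (μ : G → ℝ) (h0 : ∀ x, 0 ≤ μ x) (h1 : ∑ x, μ x = 1) (m : ℕ) :
    ∑ x, iterConv μ m x ^ 2 ≤ ∑ x, μ x ^ 2 := by
  induction m with
  | zero => exact le_rfl
  | succ m ih => exact (convG_sq_le (iterConv μ m) μ h0 h1).trans ih

lemma main_ind (hp5 : 5 ≤ p) (μ : SLp → ℝ) (h0 : ∀ x, 0 ≤ μ x) (h1 : ∑ x, μ x = 1)
    (hs : ∀ x, μ x⁻¹ = μ x)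
    (K r : ℝ) (hr : 8 ≤ r) (hK : r ^ 60000 = K)
    (hΓ : ∀ Γ : Subgroup SLp, Γ ≠ ⊤ → ∀ g : SLp, (∑ x, Set.indicator (g • (Γ : Set SLp)) μ x) ≤ K⁻¹)
    (hmax : ∀ g, μ g ≤ K⁻¹) (hf0 : ∑ x, μ x ^ 2 ≤ K⁻¹) (k : ℕ) :
    (∑ x, iterConv μ (2 ^ k - 1) x ^ 2 - (Fintype.card SLp : ℝ)⁻¹ ≤ (2 / r) ^ k) ∧
    (∑ x, iterConv μ (2 ^ (k + 1) - 1) x ^ 2 - (Fintype.card SLp : ℝ)⁻¹ ≤ (2 / r) ^ (k + 1)) := by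
  have hi : 0 ≤ (Fintype.card SLp : ℝ)⁻¹ := by positivity
  have hr1 : (1 : ℝ) ≤ r := by linarith
  have hr0 : (0 : ℝ) < r := by linarith
  have hrK : r ≤ K := by
    rw [← hK]
    calc r = r ^ 1 := (pow_one r).symm
      _ ≤ r ^ 60000 := pow_le_pow_right₀ hr1 (by norm_num)
  have hKr : K⁻¹ ≤ r⁻¹ := inv_anti₀ hr0 hrK
  have hri : r⁻¹ ≤ 1 := inv_le_one_of_one_le₀ hr1
  have hri0 : 0 < r⁻¹ := inv_pos.2 hr0
  induction k with
  | zero =>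
    constructor
    · rw [pow_zero, pow_zero]
      have := f_antitone μ h0 h1 (1 - 1)
      linarith
    · rw [zero_add, pow_one, pow_one, div_eq_mul_inv]
      have := f_antitone μ h0 h1 (2 - 1)
      linarith
  | succ k ih =>
    refine ⟨ih.2, ?_⟩
    have hM : (64 : ℝ) ≤ r ^ 2 := by nlinarith
    have st := step hp5 μ h0 h1 hs (2 ^ k - 1) K (r ^ 2) hM (by rw [← pow_mul]; exact hK.le) hΓ hmax
    have e : 4 * (2 ^ k - 1) + 3 = 2 ^ (k + 1 + 1) - 1 := by
      have : 1 ≤ 2 ^ k := Nat.one_le_two_pow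
      rw [pow_succ, pow_succ]; omega
    rw [e] at st
    refine st.trans ?_
    calc _ ≤ 4 / r ^ 2 * (2 / r) ^ k := mul_le_mul_of_nonneg_left ih.1 (by positivity)
      _ = (2 / r) ^ 2 * (2 / r) ^ k := by rw [show (2 / r) ^ 2 = 4 / r ^ 2 by rw [div_pow]; norm_num]
      _ = _ := by ring
end asm

theorem stmt18 :
    ∃ c C : ℝ, 0 < c ∧ c < 1 ∧ 1 < C ∧
      ∀ (p : ℕ) [Fact p.Prime], 5 ≤ p →
        ∀ K : ℝ, 1 ≤ K →
          ∀ μ : Matrix.SpecialLinearGroup (Fin 2) (ZMod p) → ℝ,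
            (∀ g, 0 ≤ μ g) →
            (∑ g, μ g) = 1 →
            (∀ g, μ g = μ g⁻¹) →
            (∀ Γ : Subgroup (Matrix.SpecialLinearGroup (Fin 2) (ZMod p)), Γ ≠ ⊤ →
              ∀ g : Matrix.SpecialLinearGroup (Fin 2) (ZMod p),
                (∑ x, Set.indicator (g • (Γ : Set (Matrix.SpecialLinearGroup (Fin 2) (ZMod p)))) μ x)
                  ≤ K⁻¹) →
            (∀ g, μ g ≤ K⁻¹) →
            ∀ k : ℕ, 0 < k → (k : ℝ) ≤ K ^ c →
              0 ≤ (∑ g, (iterConv μ (2 ^ k - 1) g) ^ 2) -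
                  ((Fintype.card (Matrix.SpecialLinearGroup (Fin 2) (ZMod p)) : ℝ))⁻¹ ∧
              (∑ g, (iterConv μ (2 ^ k - 1) g) ^ 2) -
                  ((Fintype.card (Matrix.SpecialLinearGroup (Fin 2) (ZMod p)) : ℝ))⁻¹ ≤
                C ^ k * K ^ (-(c * k)) := by
  refine ⟨1 / 60000, 8, by norm_num, by norm_num, by norm_num, ?_⟩
  intro p _ hp5 K hK1 μ h0 h1 hs hΓ hmax k _ _
  have hK0 : 0 < K := by linarith
  have hs' : ∀ x, μ x⁻¹ = μ x := fun x => (hs x).symm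
  constructor
  · rw [← sum_sub_unif_sq _ (iterConv_sum μ h1 _)]
    exact Finset.sum_nonneg fun x _ => sq_nonneg _
  have hf0 : ∑ x, μ x ^ 2 ≤ K⁻¹ := by
    calc ∑ x, μ x ^ 2 ≤ ∑ x, K⁻¹ * μ x := Finset.sum_le_sum fun x _ => by
          rw [sq]; exact mul_le_mul_of_nonneg_right (hmax x) (h0 x)
      _ = K⁻¹ := by rw [← Finset.mul_sum, h1, mul_one]
  obtain ⟨r, hr⟩ : ∃ r : ℝ, r = K ^ (1 / 60000 : ℝ) := ⟨_, rfl⟩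
  have hr0 : 0 < r := by rw [hr]; positivity
  have hrK : r ^ 60000 = K := by
    rw [hr, ← Real.rpow_natCast, ← Real.rpow_mul hK0.le]
    norm_num
  have ht : K ^ (-(1 / 60000 * (k : ℝ))) = (r ^ k)⁻¹ := by
    rw [hr, Real.rpow_neg hK0.le, Real.rpow_mul hK0.le, Real.rpow_natCast]
  rw [ht, ← div_eq_mul_inv, ← div_pow]
  by_cases h8 : 8 ≤ r
  · refine ((main_ind hp5 μ h0 h1 hs' K r h8 hrK hΓ hmax hf0 k).1).trans ?_
    apply pow_le_pow_left₀ (by positivity)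
    apply div_le_div_of_nonneg_right _ hr0.le
    norm_num
  · have h9 : 1 ≤ 8 / r := by rw [le_div_iff₀ hr0]; linarith
    have h10 : 1 ≤ (8 / r) ^ k := one_le_pow₀ h9
    have h11 := f_antitone μ h0 h1 (2 ^ k - 1)
    have h12 : K⁻¹ ≤ 1 := inv_le_one_of_one_le₀ hK1
    have h13 : 0 ≤ (Fintype.card (Matrix.SpecialLinearGroup (Fin 2) (ZMod p)) : ℝ)⁻¹ := by positivity
    linarith
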